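/- arXiv:math/0702516 — 2 statements merged into one kernel-verified Lean document; each statement's English description precedes it below -/
import Mathlib

section
/- Let q = 2h+3 with h ≥ 1, λ = 2cos(π/q), ρ = (λ − 2 + √(λ² − 4λ + 8))/2, α = ρ/λ, and B_n = sin(nπ/q)/sin(π/q). Let Ω_ρ = ⋃_{j=1}^{h} ( [ℓ_{j−1}, r_j) × [0, (B_{j−1}+B_j)/(B_j+B_{j+1})] ∪ [r_j, ℓ_j) × [0, B_j/B_{j+1}] ) ∪ [ℓ_h, ρ) × [0, λ/2]. Then the map 𝒯_ρ(x,y) = (T_{ρ/λ}(x), 1/(d(x)λ + ε(x)y)) maps Ω_ρ to Ω_ρ and is bijective off of a set of two-dimensional Lebesgue measure zero. -/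
open Set MeasureTheory

/-- The digit function `d(x) = ⌊|1/(xλ)| + 1 - α⌋` of the α-Rosen continued fraction. -/
noncomputable def dfun (lam α x : ℝ) : ℤ := ⌊|1 / (x * lam)| + 1 - α⌋

/-- The α-Rosen continued fraction map `T_α`. -/
noncomputable def Tmap (lam α x : ℝ) : ℝ :=
  if x = 0 then 0 else |1 / x| - lam * (dfun lam α x : ℝ)

/-- The two-dimensional natural extension map `𝒯_α(x, y) = (T_α(x), 1/(d(x)λ + ε(x)y))`. -/
noncomputable def Tnat (lam α : ℝ) (z : ℝ × ℝ) : ℝ × ℝ :=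
  (Tmap lam α z.1, 1 / ((dfun lam α z.1 : ℝ) * lam + Real.sign z.1 * z.2))

/-!
Every point of the form `(x, 1 / (dλ + sy))` with `x ∈ [ρ - λ, ρ)`, `s = ±1` and `0 < y < λ / 2` has
`(s / (x + dλ), y)` as its only preimage under `𝒯_ρ` with second coordinate in `(0, λ / 2)`: the
pair `(d, s)` is recovered from `1 / (dλ + sy)` because `dλ` is the multiple of `λ` nearest to
`dλ + sy`.
So it suffices that every inverse branch with `d ≥ 1` respects membership in `Ω_ρ`.

Now `Ω_ρ` is a staircase, the union of the sets `-p_{j+1} ≤ x < ρ`, `0 ≤ y ≤ H_{k+1}` with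
`j + k = 2h`. Both `p` and `H` satisfy `u_{k+2} = 1 / (λ - u_k)`, so the branch `d = 1`, `s = -1`
turns the corner `(-p_{j+3}, H_{k+1})` into the corner `(-p_{j+1}, H_{k+3})`, whereas all other
branches only involve the two lowest and the two rightmost steps.
-/

section RosenMap

variable {lam ρ : ℝ}

lemma sign_mul_abs_self (x : ℝ) : Real.sign x * |x| = x := by
  rcases lt_trichotomy x 0 with hx | rfl | hx
  · rw [Real.sign_of_neg hx, abs_of_neg hx]
    ring
  · simp
  · rw [Real.sign_of_pos hx, abs_of_pos hx, one_mul]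

lemma dfun_eq_iff (hlam : 0 < lam) {x : ℝ} {d : ℤ} :
    dfun lam (ρ / lam) x = d ↔ |1 / x| - lam * d ∈ Ico (ρ - lam) ρ := by
  have habs : |1 / (x * lam)| + 1 - ρ / lam = (|1 / x| + lam - ρ) / lam := by
    rw [← div_div, abs_div, abs_of_pos hlam]
    field_simp
  rw [dfun, habs, Int.floor_eq_iff, le_div_iff₀ hlam, div_lt_iff₀ hlam, mem_Ico]
  constructor <;> rintro ⟨hle, hlt⟩ <;> constructor <;> linarith

lemma Tmap_mem_Ico (hlam : 0 < lam) {x : ℝ} (hx : x ≠ 0) :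
    Tmap lam (ρ / lam) x ∈ Ico (ρ - lam) ρ := by
  rw [Tmap, if_neg hx]
  exact (dfun_eq_iff hlam).1 rfl

lemma Tmap_eq (hlam : 0 < lam) {x : ℝ} (hx : x ≠ 0) {d : ℤ}
    (hd : |1 / x| - lam * d ∈ Ico (ρ - lam) ρ) :
    Tmap lam (ρ / lam) x = |1 / x| - lam * d := by
  rw [Tmap, if_neg hx, (dfun_eq_iff hlam).2 hd]

lemma Tnat_inverse_branch (hlam : 0 < lam) {x y s : ℝ} {d : ℤ} (hx : x ∈ Ico (ρ - lam) ρ)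
    (hpos : 0 < x + d * lam) (hs : s = 1 ∨ s = -1) :
    Tnat lam (ρ / lam) (s / (x + d * lam), y) = (x, 1 / (d * lam + s * y)) := by
  have hne : s / (x + d * lam) ≠ 0 := div_ne_zero (by rcases hs with rfl | rfl <;> simp) hpos.ne'
  have hsign : Real.sign (s / (x + d * lam)) = s := by
    rcases hs with rfl | rfl
    · exact Real.sign_of_pos (by positivity)
    · exact Real.sign_of_neg (div_neg_of_neg_of_pos (by norm_num) hpos)
  have habs : |1 / (s / (x + d * lam))| - lam * d = x := by
    rw [one_div_div, abs_div, abs_of_pos hpos]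
    rcases hs with rfl | rfl <;> simp <;> ring
  have hd : |1 / (s / (x + d * lam))| - lam * d ∈ Ico (ρ - lam) ρ := by rwa [habs]
  simp only [Tnat, Tmap_eq hlam hne hd, (dfun_eq_iff hlam).2 hd, habs, hsign]

lemma Tmap_add_dfun_mul {α x : ℝ} (hx : x ≠ 0) : Tmap lam α x + dfun lam α x * lam = |1 / x| := by
  rw [Tmap, if_neg hx]
  ring

lemma sign_div_Tmap_add_dfun_mul {α x : ℝ} (hx : x ≠ 0) :
    Real.sign x / (Tmap lam α x + dfun lam α x * lam) = x := by
  rw [Tmap_add_dfun_mul hx, abs_one_div, div_div_eq_mul_div, div_one, sign_mul_abs_self]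

lemma eq_of_int_mul_add_eq (hlam : 0 < lam) {d d' : ℤ} {t t' : ℝ} (ht : |t| < lam / 2)
    (ht' : |t'| < lam / 2) (h : d * lam + t = d' * lam + t') : d = d' := by
  rw [abs_lt] at ht ht'
  have hlt : (d : ℝ) - d' < 1 := by
    refine lt_of_mul_lt_mul_right ?_ hlam.le
    linarith
  have hgt : (d' : ℝ) - d < 1 := by
    refine lt_of_mul_lt_mul_right ?_ hlam.le
    linarith
  have hlt' : d - d' < 1 := by exact_mod_cast hlt
  have hgt' : d' - d < 1 := by exact_mod_cast hgt
  omega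

lemma exists_int_mul_add_eq (hlam : 0 < lam) {w : ℝ} (hw : ∀ n : ℤ, w ≠ n * (lam / 2)) :
    ∃ (d : ℤ) (s y : ℝ), (s = 1 ∨ s = -1) ∧ y ∈ Ioo 0 (lam / 2) ∧ w = d * lam + s * y := by
  set d := round (w / lam)
  have hround : |w - d * lam| ≤ lam / 2 := by
    have h := mul_le_mul_of_nonneg_right (abs_sub_round (w / lam)) hlam.le
    rwa [← abs_of_pos hlam, ← abs_mul, abs_of_pos hlam, sub_mul, div_mul_cancel₀ _ hlam.ne',
      one_div_mul_eq_div] at h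
  have hne : w - d * lam ≠ 0 := fun h => hw (2 * d) (by push_cast; linarith)
  have hlt : |w - d * lam| ≠ lam / 2 := by
    intro h
    rcases (abs_eq (by positivity)).1 h with h | h
    · exact hw (2 * d + 1) (by push_cast; linarith)
    · exact hw (2 * d - 1) (by push_cast; linarith)
  refine ⟨d, Real.sign (w - d * lam), |w - d * lam|,
    (Real.sign_apply_eq_of_ne_zero _ hne).symm, ⟨abs_pos.2 hne, hround.lt_of_ne hlt⟩, ?_⟩
  rw [sign_mul_abs_self]
  ring

theorem injOn_Tnat (hlam : 0 < lam) (α : ℝ) :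
    InjOn (Tnat lam α) ({0}ᶜ ×ˢ Ioo 0 (lam / 2)) := by
  have abs_sign_mul {x y : ℝ} (hx : x ≠ 0) (hy : 0 < y) : |Real.sign x * y| = y := by
    rcases Real.sign_apply_eq_of_ne_zero x hx with h | h <;> simp [h, abs_of_pos hy]
  rintro ⟨x, y⟩ ⟨hx, hy0, hy⟩ ⟨x', y'⟩ ⟨hx', hy0', hy'⟩ heq
  simp only [Tnat, Prod.mk.injEq, one_div, inv_inj] at heq hx hx' hy0 hy hy0' hy'
  obtain ⟨hT, hden⟩ := heq
  have hd : dfun lam α x = dfun lam α x' :=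
    eq_of_int_mul_add_eq hlam (by rwa [abs_sign_mul hx hy0]) (by rwa [abs_sign_mul hx' hy0']) hden
  rw [hd, add_right_inj] at hden
  have hyy : y = y' := by rw [← abs_sign_mul hx hy0, hden, abs_sign_mul hx' hy0']
  have hsign : Real.sign x = Real.sign x' := by
    rw [hyy] at hden
    exact mul_right_cancel₀ hy0'.ne' hden
  rw [← sign_div_Tmap_add_dfun_mul (lam := lam) (α := α) hx,
    ← sign_div_Tmap_add_dfun_mul (lam := lam) (α := α) hx', hsign, hT, hd, hyy]

end RosenMap

section Ladder

variable {lam : ℝ}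

/-- The three-term recurrence `a (n + 2) = λ a (n + 1) - a n` governing the iterates of the Möbius
map `x ↦ 1 / (λ - x)`. -/
def ThreeTermRec (lam : ℝ) (a : ℕ → ℝ) : Prop := ∀ n, a (n + 2) = lam * a (n + 1) - a n

/-- The two orbits of `x` and `y` under the Möbius map `t ↦ 1 / (λ - t)`, interlaced: the even terms
are the orbit of `x`, the odd ones that of `y`. -/
noncomputable def ladder (lam x y : ℝ) : ℕ → ℝ
  | 0 => x
  | 1 => y
  | k + 2 => 1 / (lam - ladder lam x y k)

lemma ThreeTermRec.add_shift {a : ℕ → ℝ} (ha : ThreeTermRec lam a) (c d : ℝ) :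
    ThreeTermRec lam fun n => c * a n + d * a (n + 1) := by
  intro n
  simp only [ha (n + 1), ha n]
  ring

lemma ThreeTermRec.div_lt {a : ℕ → ℝ} (ha : ThreeTermRec lam a) {n : ℕ} (h₁ : 0 < a (n + 1))
    (h₂ : 0 < a (n + 2)) : a n / a (n + 1) < lam := by
  rw [div_lt_iff₀ h₁]
  linarith [ha n]

lemma ladder_two_mul_add {a : ℕ → ℝ} (ha : ThreeTermRec lam a) {x y : ℝ} {i : ℕ}
    (hi : ladder lam x y i = a 0 / a 1) {n : ℕ} (hne : ∀ k < n, a (k + 1) ≠ 0) :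
    ladder lam x y (2 * n + i) = a n / a (n + 1) := by
  induction n with
  | zero => rwa [mul_zero, zero_add]
  | succ n ih =>
    have hn := hne n n.lt_succ_self
    have hsub : lam - a n / a (n + 1) = a (n + 2) / a (n + 1) := by
      rw [ha]
      field_simp
    rw [show 2 * (n + 1) + i = 2 * n + i + 2 by ring, ladder,
      ih fun k hk => hne k (hk.trans n.lt_succ_self), hsub, one_div_div]

lemma ladder_lt {a b : ℕ → ℝ} (ha : ThreeTermRec lam a) (hb : ThreeTermRec lam b) {x y : ℝ}
    (hx : x = a 0 / a 1) (hy : y = b 0 / b 1) {m : ℕ} (ha_pos : ∀ n ≤ m, 0 < a (n + 1))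
    (hb_pos : ∀ n ≤ m, 0 < b (n + 1)) {k : ℕ} (hk : k < 2 * m) : ladder lam x y k < lam := by
  obtain ⟨n, rfl | rfl⟩ := Nat.even_or_odd' k
  · rw [← add_zero (2 * n), ladder_two_mul_add (i := 0) (n := n) ha (by rwa [ladder])
      fun i hi => (ha_pos i (by lia)).ne']
    exact ha.div_lt (ha_pos n (by lia)) (ha_pos (n + 1) (by lia))
  · rw [ladder_two_mul_add (i := 1) (n := n) hb (by rwa [ladder])
      fun i hi => (hb_pos i (by lia)).ne']
    exact hb.div_lt (hb_pos n (by lia)) (hb_pos (n + 1) (by lia))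

lemma one_div_le_ladder_add_two_iff {x y t : ℝ} {k : ℕ} (hk : ladder lam x y k < lam)
    (ht : t < lam) : 1 / (lam - t) ≤ ladder lam x y (k + 2) ↔ t ≤ ladder lam x y k := by
  rw [ladder, one_div_le_one_div (sub_pos.2 ht) (sub_pos.2 hk), sub_le_sub_iff_left]

lemma ladder_le_succ {x y : ℝ} (hxy : x ≤ y) (hyx : y ≤ 1 / (lam - x)) {n : ℕ}
    (hlt : ∀ k, k + 2 ≤ n → ladder lam x y k < lam) :
    ∀ k, k + 1 ≤ n → ladder lam x y k ≤ ladder lam x y (k + 1)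
  | 0, _ => hxy
  | 1, _ => hyx
  | k + 2, hk =>
    one_div_le_one_div_of_le (sub_pos.2 (hlt (k + 1) hk))
      (sub_le_sub_left (ladder_le_succ hxy hyx hlt k (by lia)) lam)

lemma ladder_monotoneOn {x y : ℝ} (hxy : x ≤ y) (hyx : y ≤ 1 / (lam - x)) {n : ℕ}
    (hlt : ∀ k, k + 2 ≤ n → ladder lam x y k < lam) : MonotoneOn (ladder lam x y) (Iic n) :=
  monotoneOn_of_le_add_one ordConnected_Iic fun k _ _ hk => ladder_le_succ hxy hyx hlt k hk

end Ladder

section Chebyshev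

/-- The numbers `B_n = sin (nπ/q) / sin (π/q)` as polynomials in `λ = 2 cos (π/q)`: the value at `λ`
of the rescaled Chebyshev polynomial `S_{n-1}`. -/
noncomputable def rosenB (lam : ℝ) (n : ℕ) : ℝ := (Polynomial.Chebyshev.S ℝ (n - 1)).eval lam

lemma rosenB_zero (lam : ℝ) : rosenB lam 0 = 0 := by simp [rosenB]

lemma rosenB_one (lam : ℝ) : rosenB lam 1 = 1 := by simp [rosenB]

lemma rosenB_threeTermRec (lam : ℝ) : ThreeTermRec lam (rosenB lam) := by
  intro n
  have h := congrArg (Polynomial.eval lam) (Polynomial.Chebyshev.S_add_one ℝ n)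
  have hn : (n : ℤ) + 2 - 1 = n + 1 := by ring
  simpa [rosenB, hn] using h

lemma rosenB_two (lam : ℝ) : rosenB lam 2 = lam := by
  rw [rosenB_threeTermRec, rosenB_zero, rosenB_one, mul_one, sub_zero]

lemma rosenB_two_mul_cos {θ : ℝ} (hθ : Real.sin θ ≠ 0) (n : ℕ) :
    rosenB (2 * Real.cos θ) n = Real.sin (n * θ) / Real.sin θ := by
  rw [eq_div_iff hθ, rosenB, Polynomial.Chebyshev.S_two_mul_real_cos]
  push_cast
  rw [sub_add_cancel]

end Chebyshev

section Staircase

variable {h : ℕ} {lam ρ : ℝ}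

/-- The algebraic facts about `λ = 2 cos (π / (2h + 3))` and `ρ` from which the structure of the
natural extension domain follows. -/
structure OddRosenParams (h : ℕ) (lam ρ : ℝ) : Prop where
  lam_lt_two : lam < 2
  rho_pos : 0 < ρ
  rho_sq : ρ ^ 2 + (2 - lam) * ρ = 1
  rosenB_pos : ∀ n ≤ h + 1, 0 < rosenB lam (n + 1)
  rosenB_mid : rosenB lam (h + 1) = rosenB lam (h + 2)

/-- The cut points of the natural extension domain, negated and listed from right to left:
`ℓ_i = -negCut (2 (h - i) + 1)` and `r_{i+1} = -negCut (2 (h - i))`. -/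
noncomputable def negCut (lam ρ : ℝ) : ℕ → ℝ := ladder lam (-ρ) (1 / (2 + ρ))

/-- The heights of the fibres of the natural extension domain: the even terms are
`B_j / B_{j+1}`, the odd ones `(B_j + B_{j+1}) / (B_{j+1} + B_{j+2})`. -/
noncomputable def fibreHeight (lam : ℝ) : ℕ → ℝ := ladder lam 0 (1 / (1 + lam))

/-- The natural extension domain `Ω_ρ` as the union of the quadrants to the lower
right of its corners, truncated to `x < ρ` and `0 ≤ y`. -/
def staircase (h : ℕ) (lam ρ : ℝ) : Set (ℝ × ℝ) :=
  {z | ∃ j k, j + k = 2 * h ∧ z.1 ∈ Ico (-negCut lam ρ (j + 1)) ρ ∧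
    z.2 ∈ Icc 0 (fibreHeight lam (k + 1))}

-- The terms of fixed parity in a ladder are ratios of consecutive terms of a sequence
-- `c * B_n + d * B_{n+1}`; the seed lemmas pick the `c` and `d` that match the first ratio.
lemma negCut_even_seed (lam ρ : ℝ) : -ρ = ((1 + ρ * lam) * rosenB lam 0 + -ρ * rosenB lam 1) /
    ((1 + ρ * lam) * rosenB lam 1 + -ρ * rosenB lam 2) := by
  rw [rosenB_zero, rosenB_one, rosenB_two]
  ring

lemma fibreHeight_even_seed (lam : ℝ) : 0 = (1 * rosenB lam 0 + 0 * rosenB lam 1) /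
    (1 * rosenB lam 1 + 0 * rosenB lam 2) := by
  rw [rosenB_zero]
  ring

lemma fibreHeight_odd_seed (lam : ℝ) : 1 / (1 + lam) = (1 * rosenB lam 0 + 1 * rosenB lam 1) /
    (1 * rosenB lam 1 + 1 * rosenB lam 2) := by
  rw [rosenB_zero, rosenB_one, rosenB_two]
  ring

namespace OddRosenParams

lemma rosenB_eq (P : OddRosenParams h lam ρ) : rosenB lam h = (lam - 1) * rosenB lam (h + 1) := by
  linarith [rosenB_threeTermRec lam h, P.rosenB_mid]

lemma one_le_lam (P : OddRosenParams h lam ρ) : 1 ≤ lam := by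
  have hB : 0 ≤ rosenB lam h := by
    rcases h with _ | h
    · rw [rosenB_zero]
    · exact (P.rosenB_pos h (by lia)).le
  rw [P.rosenB_eq] at hB
  exact sub_nonneg.1 (nonneg_of_mul_nonneg_left hB (P.rosenB_pos h (by lia)))

lemma lam_pos (P : OddRosenParams h lam ρ) : 0 < lam := one_pos.trans_le P.one_le_lam

lemma rho_lt_one (P : OddRosenParams h lam ρ) : ρ < 1 := by
  nlinarith [P.rho_sq, P.lam_lt_two, P.rho_pos]

lemma lam_lt_one_add_rho (P : OddRosenParams h lam ρ) : lam < 1 + ρ := by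
  nlinarith [P.rho_sq, P.lam_lt_two, P.rho_pos, P.one_le_lam]

lemma one_div_rho (P : OddRosenParams h lam ρ) : 1 / ρ = ρ + 2 - lam := by
  rw [div_eq_iff P.rho_pos.ne']
  linarith [P.rho_sq]

lemma rosenB_nonneg (P : OddRosenParams h lam ρ) {n : ℕ} (hn : n ≤ h + 2) : 0 ≤ rosenB lam n := by
  rcases n with _ | n
  · rw [rosenB_zero]
  · exact (P.rosenB_pos n (by lia)).le

lemma negCut_even_pos (P : OddRosenParams h lam ρ) {n : ℕ} (hn : n ≤ h + 1) :
    0 < (1 + ρ * lam) * rosenB lam (n + 1) + -ρ * rosenB lam (n + 2) := by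
  have heq : (1 + ρ * lam) * rosenB lam (n + 1) + -ρ * rosenB lam (n + 2) =
      rosenB lam (n + 1) + ρ * rosenB lam n := by
    rw [rosenB_threeTermRec]
    ring
  rw [heq]
  exact add_pos_of_pos_of_nonneg (P.rosenB_pos n hn)
    (mul_nonneg P.rho_pos.le (P.rosenB_nonneg (by lia)))

lemma rosenB_add_mul_pos (P : OddRosenParams h lam ρ) {c : ℝ} (hc : 0 ≤ c) {n : ℕ} (hn : n ≤ h) :
    0 < 1 * rosenB lam (n + 1) + c * rosenB lam (n + 2) := by
  rw [one_mul]
  exact add_pos_of_pos_of_nonneg (P.rosenB_pos n (by lia))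
    (mul_nonneg hc (P.rosenB_nonneg (by lia)))

lemma negCut_odd_seed (P : OddRosenParams h lam ρ) :
    1 / (2 + ρ) = (1 * rosenB lam 0 + ρ * rosenB lam 1) /
      (1 * rosenB lam 1 + ρ * rosenB lam 2) := by
  have hρ := P.rho_pos
  have hlam := P.lam_pos
  rw [rosenB_zero, rosenB_one, rosenB_two, div_eq_div_iff (by positivity) (by positivity)]
  linarith [P.rho_sq]

lemma negCut_lt (P : OddRosenParams h lam ρ) {k : ℕ} (hk : k < 2 * h) : negCut lam ρ k < lam :=
  ladder_lt ((rosenB_threeTermRec lam).add_shift (1 + ρ * lam) (-ρ))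
    ((rosenB_threeTermRec lam).add_shift 1 ρ) (negCut_even_seed lam ρ) P.negCut_odd_seed
    (fun _ hn => P.negCut_even_pos (by lia)) (fun _ hn => P.rosenB_add_mul_pos P.rho_pos.le hn) hk

lemma fibreHeight_lt (P : OddRosenParams h lam ρ) {k : ℕ} (hk : k < 2 * h) :
    fibreHeight lam k < lam :=
  ladder_lt ((rosenB_threeTermRec lam).add_shift 1 0) ((rosenB_threeTermRec lam).add_shift 1 1)
    (fibreHeight_even_seed lam) (fibreHeight_odd_seed lam)
    (fun _ hn => P.rosenB_add_mul_pos le_rfl hn)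
    (fun _ hn => P.rosenB_add_mul_pos zero_le_one hn) hk

lemma negCut_monotoneOn (P : OddRosenParams h lam ρ) :
    MonotoneOn (negCut lam ρ) (Iic (2 * h + 1)) := by
  have hρ := P.rho_pos
  refine ladder_monotoneOn ?_ ?_ fun k hk => P.negCut_lt (by lia)
  · exact (neg_nonpos.2 hρ.le).trans (by positivity)
  · rw [sub_neg_eq_add]
    exact one_div_le_one_div_of_le (add_pos P.lam_pos hρ) (by linarith [P.lam_lt_two])

lemma fibreHeight_monotoneOn (P : OddRosenParams h lam ρ) :
    MonotoneOn (fibreHeight lam) (Iic (2 * h + 1)) := by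
  have hlam := P.lam_pos
  refine ladder_monotoneOn (by positivity) ?_ fun k hk => P.fibreHeight_lt (by lia)
  rw [sub_zero]
  exact one_div_le_one_div_of_le hlam (by linarith)

lemma fibreHeight_two_mul (P : OddRosenParams h lam ρ) {n : ℕ} (hn : n ≤ h + 1) :
    fibreHeight lam (2 * n) = rosenB lam n / rosenB lam (n + 1) := by
  have heq := ladder_two_mul_add (i := 0) (n := n) ((rosenB_threeTermRec lam).add_shift 1 0)
    (x := 0) (y := 1 / (1 + lam)) (fibreHeight_even_seed lam)
    fun k hk => (P.rosenB_add_mul_pos le_rfl (by lia)).ne'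
  simpa only [one_mul, zero_mul, add_zero, fibreHeight] using heq

lemma fibreHeight_two_mul_add_one (P : OddRosenParams h lam ρ) {n : ℕ} (hn : n ≤ h + 1) :
    fibreHeight lam (2 * n + 1) =
      (rosenB lam n + rosenB lam (n + 1)) / (rosenB lam (n + 1) + rosenB lam (n + 2)) := by
  have heq := ladder_two_mul_add (i := 1) (n := n) ((rosenB_threeTermRec lam).add_shift 1 1)
    (x := 0) (y := 1 / (1 + lam)) (fibreHeight_odd_seed lam)
    fun k hk => (P.rosenB_add_mul_pos zero_le_one (by lia)).ne'
  simpa only [one_mul, fibreHeight] using heq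

lemma fibreHeight_two_mul_self (P : OddRosenParams h lam ρ) :
    fibreHeight lam (2 * h) = lam - 1 := by
  rw [P.fibreHeight_two_mul (by lia), P.rosenB_eq, mul_div_cancel_right₀]
  exact (P.rosenB_pos h (by lia)).ne'

lemma fibreHeight_two_mul_self_add_one (P : OddRosenParams h lam ρ) :
    fibreHeight lam (2 * h + 1) = lam / 2 := by
  have hB := P.rosenB_pos h (by lia)
  rw [P.fibreHeight_two_mul_add_one (by lia), P.rosenB_eq, ← P.rosenB_mid]
  field_simp
  ring

lemma negCut_two_mul_self (P : OddRosenParams h lam ρ) :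
    negCut lam ρ (2 * h) = lam - 1 / ρ := by
  have heq := ladder_two_mul_add (i := 0) (n := h)
    ((rosenB_threeTermRec lam).add_shift (1 + ρ * lam) (-ρ)) (y := 1 / (2 + ρ))
    (negCut_even_seed lam ρ) fun k hk => (P.negCut_even_pos (by lia)).ne'
  have hpos := P.negCut_even_pos (n := h) (by lia)
  rw [add_zero] at heq
  rw [negCut, heq, div_eq_iff hpos.ne', P.one_div_rho, ← P.rosenB_mid, P.rosenB_eq]
  linear_combination rosenB lam (h + 1) * (lam - 1) * P.rho_sq

lemma negCut_two_mul_self_add_one (P : OddRosenParams h lam ρ) :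
    negCut lam ρ (2 * h + 1) = lam - ρ := by
  have hρ := P.rho_pos
  have heq := ladder_two_mul_add (i := 1) (n := h) ((rosenB_threeTermRec lam).add_shift 1 ρ)
    (x := -ρ) (y := 1 / (2 + ρ)) P.negCut_odd_seed
    fun k hk => (P.rosenB_add_mul_pos P.rho_pos.le (by lia)).ne'
  have hpos := P.rosenB_add_mul_pos hρ.le (n := h) le_rfl
  rw [negCut, heq, div_eq_iff hpos.ne', ← P.rosenB_mid, P.rosenB_eq]
  linear_combination rosenB lam (h + 1) * P.rho_sq

lemma staircase_subset (P : OddRosenParams h lam ρ) :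
    staircase h lam ρ ⊆ Ico (ρ - lam) ρ ×ˢ Icc 0 (lam / 2) := by
  rintro z ⟨j, k, hjk, ⟨hx, hxρ⟩, hy0, hy⟩
  have hj : negCut lam ρ (j + 1) ≤ lam - ρ := P.negCut_two_mul_self_add_one ▸
    P.negCut_monotoneOn (mem_Iic.2 (by lia)) self_mem_Iic (by lia)
  have hk : fibreHeight lam (k + 1) ≤ lam / 2 := P.fibreHeight_two_mul_self_add_one ▸
    P.fibreHeight_monotoneOn (mem_Iic.2 (by lia)) self_mem_Iic (by lia)
  exact ⟨⟨by linarith, hxρ⟩, hy0, hy.trans hk⟩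

lemma mem_staircase_iff_of_snd_le (P : OddRosenParams h lam ρ) {x y : ℝ} (hx : x ∈ Ico (ρ - lam) ρ)
    (hy : y ∈ Icc 0 (1 / lam)) :
    (x, y) ∈ staircase h lam ρ ↔ 1 / ρ - lam ≤ x ∨ y ≤ 1 / (1 + lam) := by
  constructor
  · rintro ⟨j, _ | k, hjk, ⟨hjx, -⟩, -, hky⟩
    · exact Or.inr hky
    · have hj : negCut lam ρ (j + 1) ≤ lam - 1 / ρ := P.negCut_two_mul_self ▸
        P.negCut_monotoneOn (mem_Iic.2 (by lia)) (mem_Iic.2 (by lia)) (by lia)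
      exact Or.inl (by linarith)
  · rintro (hx' | hy')
    · rcases h with _ | h
      · have hcut : -ρ = lam - 1 / ρ := P.negCut_two_mul_self
        linarith [hx.2]
      · refine ⟨2 * h + 1, 1, by ring, ⟨?_, hx.2⟩, hy.1, ?_⟩
        · rw [show 2 * h + 1 + 1 = 2 * (h + 1) by ring, P.negCut_two_mul_self]
          linarith
        · exact hy.2.trans_eq (by simp [fibreHeight, ladder])
    · refine ⟨2 * h, 0, rfl, ⟨?_, hx.2⟩, hy.1, hy'⟩
      rw [P.negCut_two_mul_self_add_one]
      linarith [hx.1]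

lemma mem_staircase_iff_of_le_fst (P : OddRosenParams h lam ρ) {x y : ℝ}
    (hx : x ∈ Ico (-(1 / (lam + ρ))) ρ) (hy : y ∈ Ioc 0 (lam / 2)) :
    (x, y) ∈ staircase h lam ρ ↔ -(1 / (2 + ρ)) ≤ x ∨ y ≤ lam - 1 := by
  constructor
  · rintro ⟨_ | j, k, hjk, ⟨hjx, -⟩, -, hky⟩
    · exact Or.inl hjx
    · have hk : fibreHeight lam (k + 1) ≤ lam - 1 := P.fibreHeight_two_mul_self ▸
        P.fibreHeight_monotoneOn (mem_Iic.2 (by lia)) (mem_Iic.2 (by lia)) (by lia)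
      exact Or.inr (hky.trans hk)
  · rintro (hx' | hy')
    · refine ⟨0, 2 * h, zero_add _, ⟨hx', hx.2⟩, hy.1.le, ?_⟩
      exact hy.2.trans_eq P.fibreHeight_two_mul_self_add_one.symm
    · rcases h with _ | h
      · have hheight : 0 = lam - 1 := P.fibreHeight_two_mul_self
        linarith [hy.1]
      · refine ⟨1, 2 * h + 1, by ring, ⟨?_, hx.2⟩, hy.1.le, ?_⟩
        · refine le_of_eq_of_le ?_ hx.1
          simp [negCut, ladder]
        · rw [show 2 * h + 1 + 1 = 2 * (h + 1) by ring, P.fibreHeight_two_mul_self]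
          exact hy'

end OddRosenParams

end Staircase

section Branches

variable {h : ℕ} {lam ρ x y : ℝ}

lemma neg_negCut_add_two_le_iff {k : ℕ} (hk : negCut lam ρ k < lam) (hx : 0 < x + lam) :
    -negCut lam ρ (k + 2) ≤ -1 / (x + lam) ↔ -negCut lam ρ k ≤ x := by
  rw [neg_div, neg_le_neg_iff, neg_le, add_comm, ← sub_neg_eq_add]
  exact one_div_le_ladder_add_two_iff hk (by linarith)

namespace OddRosenParams

lemma neg_branch_one_mem_iff (P : OddRosenParams h lam ρ) (hx : x ∈ Ico (ρ - lam) ρ)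
    (hy : y ∈ Ioo 0 (lam / 2)) :
    (-1 / (x + lam), y) ∈ staircase h lam ρ ↔ (x, 1 / (lam - y)) ∈ staircase h lam ρ := by
  have hρ := P.rho_pos
  have hlam := P.lam_pos
  have hx_pos : 0 < x + lam := by linarith [hx.1]
  have hy_lt : y < lam := by linarith [hy.2]
  constructor
  · rintro ⟨_ | _ | j, k, hjk, ⟨hj, -⟩, -, hk⟩
    · have hle : 2 + ρ ≤ x + lam := by
        rwa [neg_div, neg_le_neg_iff, negCut, ladder,
          one_div_le_one_div hx_pos (by positivity)] at hj
      linarith [hx.2, P.lam_lt_two]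
    · have hle : - -ρ ≤ x :=
        (neg_negCut_add_two_le_iff (k := 0) ((neg_neg_of_pos hρ).trans hlam) hx_pos).1 hj
      linarith [hx.2]
    · refine ⟨j, k + 2, by lia, ⟨?_, hx.2⟩, one_div_nonneg.2 (sub_nonneg.2 hy_lt.le), ?_⟩
      · exact (neg_negCut_add_two_le_iff (P.negCut_lt (by lia)) hx_pos).1 hj
      · exact (one_div_le_ladder_add_two_iff (P.fibreHeight_lt (by lia)) hy_lt).2 hk
  · rintro ⟨j, k, hjk, ⟨hj, -⟩, -, hk⟩
    have hlt : 1 / lam < fibreHeight lam (k + 1) :=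
      (one_div_lt_one_div_of_lt (sub_pos.2 hy_lt) (by linarith [hy.1])).trans_le hk
    rcases k with _ | _ | k
    · rw [fibreHeight, ladder, one_div_lt_one_div hlam (by positivity)] at hlt
      linarith
    · rw [fibreHeight, ladder, ladder, sub_zero] at hlt
      exact absurd hlt (lt_irrefl _)
    · refine ⟨j + 2, k, by lia, ⟨?_, ?_⟩, hy.1.le, ?_⟩
      · exact (neg_negCut_add_two_le_iff (P.negCut_lt (by lia)) hx_pos).2 hj
      · exact (div_neg_of_neg_of_pos neg_one_lt_zero hx_pos).trans hρ
      · exact (one_div_le_ladder_add_two_iff (P.fibreHeight_lt (by lia)) hy_lt).1 hk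

lemma neg_branch_two_mem_iff (P : OddRosenParams h lam ρ) (hx : x ∈ Ico (ρ - lam) ρ)
    (hy : y ∈ Ioo 0 (lam / 2)) :
    (-1 / (x + 2 * lam), y) ∈ staircase h lam ρ ↔ (x, 1 / (2 * lam - y)) ∈ staircase h lam ρ := by
  have hρ := P.rho_pos
  have hlam := P.lam_pos
  have hx_pos : 0 < x + 2 * lam := by linarith [hx.1]
  have hy_pos : 0 < 2 * lam - y := by linarith [hy.2]
  have source_fst : -1 / (x + 2 * lam) ∈ Ico (-(1 / (lam + ρ))) ρ := by
    rw [neg_div]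
    refine ⟨neg_le_neg (one_div_le_one_div_of_le (by positivity) (by linarith [hx.1])), ?_⟩
    exact (neg_neg_of_pos (one_div_pos.2 hx_pos)).trans hρ
  have image_snd : 1 / (2 * lam - y) ∈ Icc 0 (1 / lam) :=
    ⟨(one_div_pos.2 hy_pos).le, one_div_le_one_div_of_le hlam (by linarith [hy.2])⟩
  rw [P.mem_staircase_iff_of_le_fst source_fst ⟨hy.1, hy.2.le⟩,
    P.mem_staircase_iff_of_snd_le hx image_snd, neg_div, neg_le_neg_iff,
    one_div_le_one_div hx_pos (by positivity), one_div_le_one_div hy_pos (by positivity),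
    P.one_div_rho]
  constructor <;> rintro (hle | hle)
  exacts [Or.inl (by linarith), Or.inr (by linarith), Or.inl (by linarith), Or.inr (by linarith)]

lemma pos_branch_one_mem_iff (P : OddRosenParams h lam ρ) (hx : x ∈ Ico (ρ - lam) ρ)
    (hy : y ∈ Ioo 0 (lam / 2)) (hne : 1 / (x + lam) ≠ ρ) :
    (1 / (x + lam), y) ∈ staircase h lam ρ ↔ (x, 1 / (lam + y)) ∈ staircase h lam ρ := by
  have hρ := P.rho_pos
  have hlam := P.lam_pos
  have hx_pos : 0 < x + lam := by linarith [hx.1]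
  have hy_pos : 0 < lam + y := by linarith [hy.1]
  have image_snd : 1 / (lam + y) ∈ Icc 0 (1 / lam) :=
    ⟨(one_div_pos.2 hy_pos).le, one_div_le_one_div_of_le hlam (by linarith [hy.1])⟩
  have hy_image : ¬ 1 / (lam + y) ≤ 1 / (1 + lam) := by
    rw [one_div_le_one_div hy_pos (by positivity)]
    linarith [hy.2, P.lam_lt_two]
  rw [P.mem_staircase_iff_of_snd_le hx image_snd, or_iff_left hy_image, tsub_le_iff_right,
    one_div_le hρ hx_pos]
  refine ⟨fun hmem => (P.staircase_subset hmem).1.2.le, fun hle => ?_⟩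
  have hpos : 0 < 1 / (x + lam) := one_div_pos.2 hx_pos
  refine (P.mem_staircase_iff_of_le_fst ⟨?_, hle.lt_of_ne hne⟩ ⟨hy.1, hy.2.le⟩).2 (Or.inl ?_)
  all_goals exact (neg_nonpos.2 (by positivity)).trans hpos.le

lemma mem_staircase_of_le_fst (P : OddRosenParams h lam ρ) (hx : x ∈ Ico (-(1 / (2 + ρ))) ρ)
    (hy : y ∈ Ioo 0 (lam / 2)) : (x, y) ∈ staircase h lam ρ := by
  have hlam := P.lam_pos
  have hρ := P.rho_pos
  refine (P.mem_staircase_iff_of_le_fst ⟨?_, hx.2⟩ ⟨hy.1, hy.2.le⟩).2 (Or.inl hx.1)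
  have hcut : 1 / (2 + ρ) ≤ 1 / (lam + ρ) :=
    one_div_le_one_div_of_le (add_pos hlam hρ) (by linarith [P.lam_lt_two])
  linarith [hx.1]

lemma mem_staircase_of_one_add_lam_le (P : OddRosenParams h lam ρ) (hx : x ∈ Ico (ρ - lam) ρ)
    (hy : 1 + lam ≤ y) : (x, 1 / y) ∈ staircase h lam ρ := by
  have hlam := P.lam_pos
  have hy_pos : 0 < y := by linarith
  exact (P.mem_staircase_iff_of_snd_le hx
    ⟨(one_div_pos.2 hy_pos).le, one_div_le_one_div_of_le hlam (by linarith)⟩).2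
    (Or.inr (one_div_le_one_div_of_le (by positivity) hy))

lemma pos_branch_mem_iff (P : OddRosenParams h lam ρ) (hx : x ∈ Ico (ρ - lam) ρ)
    (hy : y ∈ Ioo 0 (lam / 2)) {d : ℤ} (hd : 1 ≤ d) (hne : 1 / (x + d * lam) ≠ ρ) :
    (1 / (x + d * lam), y) ∈ staircase h lam ρ ↔ (x, 1 / (d * lam + y)) ∈ staircase h lam ρ := by
  have hlam := P.lam_pos
  have hρ := P.rho_pos
  obtain rfl | hd' := hd.eq_or_lt
  · simp only [Int.cast_one, one_mul] at hne ⊢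
    exact P.pos_branch_one_mem_iff hx hy hne
  · have hd_lam : 2 * lam ≤ d * lam := by
      gcongr
      exact_mod_cast hd'
    have hx_pos : 0 < x + d * lam := by linarith [hx.1]
    have hle : 1 / (x + d * lam) ≤ ρ := by
      rw [div_le_iff₀ hx_pos]
      nlinarith [hx.1, P.rho_sq, P.one_le_lam]
    refine iff_of_true (P.mem_staircase_of_le_fst ⟨?_, hle.lt_of_ne hne⟩ hy)
      (P.mem_staircase_of_one_add_lam_le hx ?_)
    · exact (neg_nonpos.2 (by positivity)).trans (by positivity)
    · linarith [hy.1, P.one_le_lam]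

lemma neg_branch_mem_iff (P : OddRosenParams h lam ρ) (hx : x ∈ Ico (ρ - lam) ρ)
    (hy : y ∈ Ioo 0 (lam / 2)) {d : ℤ} (hd : 1 ≤ d) :
    (-1 / (x + d * lam), y) ∈ staircase h lam ρ ↔ (x, 1 / (d * lam - y)) ∈ staircase h lam ρ := by
  have hρ := P.rho_pos
  obtain rfl | rfl | hd' : d = 1 ∨ d = 2 ∨ 3 ≤ d := by lia
  · simpa only [Int.cast_one, one_mul] using P.neg_branch_one_mem_iff hx hy
  · exact_mod_cast P.neg_branch_two_mem_iff hx hy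
  · have hd_lam : 3 * lam ≤ d * lam := by
      have hlam := P.lam_pos
      gcongr
      exact_mod_cast hd'
    have hx_le : 2 + ρ ≤ x + d * lam := by linarith [hx.1, P.one_le_lam]
    refine iff_of_true (P.mem_staircase_of_le_fst ⟨?_, ?_⟩ hy)
      (P.mem_staircase_of_one_add_lam_le hx ?_)
    · rw [neg_div]
      exact neg_le_neg (one_div_le_one_div_of_le (by positivity) hx_le)
    · exact (div_neg_of_neg_of_pos neg_one_lt_zero (by linarith)).trans hρ
    · linarith [hy.2, P.one_le_lam]

theorem inverse_branch_mem_iff (P : OddRosenParams h lam ρ) (hx : x ∈ Ico (ρ - lam) ρ)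
    (hy : y ∈ Ioo 0 (lam / 2)) {s : ℝ} (hs : s = 1 ∨ s = -1) {d : ℤ} (hd : 1 ≤ d)
    (hne : s / (x + d * lam) ≠ ρ) :
    (s / (x + d * lam), y) ∈ staircase h lam ρ ↔
      (x, 1 / (d * lam + s * y)) ∈ staircase h lam ρ := by
  rcases hs with rfl | rfl
  · simpa only [one_mul] using P.pos_branch_mem_iff hx hy hd hne
  · simpa only [neg_one_mul, ← sub_eq_add_neg] using P.neg_branch_mem_iff hx hy hd

end OddRosenParams

end Branches

section Bijectivity

variable {h : ℕ} {lam ρ : ℝ}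

lemma volume_fst_preimage_union_snd_preimage {s t : Set ℝ} (hs : s.Countable) (ht : t.Countable) :
    volume (Prod.fst ⁻¹' s ∪ Prod.snd ⁻¹' t : Set (ℝ × ℝ)) = 0 :=
  measure_union_null
    (Measure.quasiMeasurePreserving_fst.preimage_null (hs.measure_zero volume))
    (Measure.quasiMeasurePreserving_snd.preimage_null (ht.measure_zero volume))

namespace OddRosenParams

lemma one_le_dfun (P : OddRosenParams h lam ρ) {x : ℝ} (hx : x ∈ Ico (ρ - lam) ρ) (hx0 : x ≠ 0) :
    1 ≤ dfun lam (ρ / lam) x := by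
  have habs : |x| < 1 :=
    abs_lt.2 ⟨by linarith [hx.1, P.lam_lt_one_add_rho], hx.2.trans P.rho_lt_one⟩
  have hinv : 1 < |1 / x| := by
    rw [abs_one_div]
    exact one_lt_one_div (abs_pos.2 hx0) habs
  have hd : 0 < dfun lam (ρ / lam) x * lam := by
    linarith [Tmap_add_dfun_mul (lam := lam) (α := ρ / lam) hx0,
      (Tmap_mem_Ico (ρ := ρ) P.lam_pos hx0).2, P.rho_lt_one]
  exact_mod_cast pos_of_mul_pos_left hd P.lam_pos.le

lemma Tnat_mem_staircase (P : OddRosenParams h lam ρ) {z : ℝ × ℝ} (hz : z ∈ staircase h lam ρ)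
    (hz' : z ∈ ({0}ᶜ : Set ℝ) ×ˢ Ioo 0 (lam / 2)) :
    Tnat lam (ρ / lam) z ∈ staircase h lam ρ := by
  have hx := (P.staircase_subset hz).1
  have hx0 : z.1 ≠ 0 := hz'.1
  have hbranch := sign_div_Tmap_add_dfun_mul (lam := lam) (α := ρ / lam) hx0
  refine (P.inverse_branch_mem_iff (Tmap_mem_Ico P.lam_pos hx0) hz'.2
    (Real.sign_apply_eq_of_ne_zero _ hx0).symm (P.one_le_dfun hx hx0) ?_).1 ?_
  · exact hbranch.trans_ne hx.2.ne
  · rwa [hbranch]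

lemma mem_image_Tnat (P : OddRosenParams h lam ρ) {z : ℝ × ℝ} (hz : z ∈ staircase h lam ρ)
    (hx : ∀ d : ℤ, z.1 ≠ 1 / ρ - d * lam) (hy : ∀ n : ℤ, 1 / z.2 ≠ n * (lam / 2)) :
    z ∈ Tnat lam (ρ / lam) '' (staircase h lam ρ ∩ {0}ᶜ ×ˢ Ioo 0 (lam / 2)) := by
  obtain ⟨hzx, hzy0, hzy⟩ := P.staircase_subset hz
  have hlam := P.lam_pos
  have hy_pos : 0 < z.2 := hzy0.lt_of_ne fun h0 => hy 0 (by simp [← h0])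
  obtain ⟨d, s, y, hs, hy', hw⟩ := exists_int_mul_add_eq hlam hy
  have hd : 1 ≤ d := by
    have hinv : lam / 2 < 1 / z.2 := by
      refine lt_of_lt_of_le ?_ (one_div_le_one_div_of_le hy_pos hzy)
      rw [lt_div_iff₀ (by positivity)]
      nlinarith [P.lam_lt_two]
    have hd_pos : 0 < d * lam := by rcases hs with rfl | rfl <;> linarith [hy'.1, hy'.2]
    exact_mod_cast pos_of_mul_pos_left hd_pos hlam.le
  have hpos : 0 < z.1 + d * lam := by
    have hd_lam : 1 * lam ≤ d * lam := by
      gcongr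
      exact_mod_cast hd
    linarith [hzx.1, P.rho_pos]
  have hne : s / (z.1 + d * lam) ≠ ρ := by
    intro heq
    rcases hs with rfl | rfl
    · rw [div_eq_iff hpos.ne'] at heq
      refine hx d (eq_sub_of_add_eq ?_)
      rw [heq, mul_div_cancel_left₀ _ P.rho_pos.ne']
    · exact ((div_neg_of_neg_of_pos neg_one_lt_zero hpos).trans P.rho_pos).ne heq
  have hz_eq : (z.1, 1 / (d * lam + s * y)) = z := by rw [← hw, one_div_one_div]
  refine ⟨(s / (z.1 + d * lam), y), ⟨?_, ?_, hy'⟩, ?_⟩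
  · rwa [P.inverse_branch_mem_iff hzx hy' hs hd hne, hz_eq]
  · exact div_ne_zero (by rcases hs with rfl | rfl <;> simp) hpos.ne'
  · rw [Tnat_inverse_branch hlam hzx hpos hs, hz_eq]

theorem exists_bijOn_staircase (P : OddRosenParams h lam ρ) :
    ∃ N N' : Set (ℝ × ℝ), N ⊆ staircase h lam ρ ∧ N' ⊆ staircase h lam ρ ∧
      volume N = 0 ∧ volume N' = 0 ∧
      BijOn (Tnat lam (ρ / lam)) (staircase h lam ρ \ N) (staircase h lam ρ \ N') := by
  set S := staircase h lam ρ
  set G : Set (ℝ × ℝ) := {0}ᶜ ×ˢ Ioo 0 (lam / 2)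
  have himage : Tnat lam (ρ / lam) '' (S ∩ G) ⊆ S :=
    image_subset_iff.2 fun z hz => P.Tnat_mem_staircase hz.1 hz.2
  refine ⟨S \ G, S \ Tnat lam (ρ / lam) '' (S ∩ G), sdiff_subset, sdiff_subset, ?_, ?_, ?_⟩
  · refine measure_mono_null (fun z hz => ?_) (volume_fst_preimage_union_snd_preimage
      (countable_singleton 0) (to_countable {0, lam / 2}))
    obtain ⟨-, hy0, hy⟩ := P.staircase_subset hz.1
    by_contra hbad
    simp only [mem_union, mem_preimage, mem_singleton_iff, mem_insert_iff, not_or] at hbad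
    exact hz.2 ⟨hbad.1, hy0.lt_of_ne' hbad.2.1, hy.lt_of_ne hbad.2.2⟩
  · refine measure_mono_null (fun z hz => ?_) (volume_fst_preimage_union_snd_preimage
      (countable_range fun d : ℤ => 1 / ρ - d * lam)
      (countable_range fun n : ℤ => 1 / (n * (lam / 2))))
    by_contra hbad
    refine hz.2 (P.mem_image_Tnat hz.1 (fun d hd => hbad (Or.inl ⟨d, hd.symm⟩))
      fun n hn => hbad (Or.inr ⟨n, ?_⟩))
    simp only [← hn, one_div_one_div]
  · rw [Set.sdiff_sdiff_right_self, sdiff_sdiff_cancel_left himage]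
    exact ((injOn_Tnat P.lam_pos _).mono inter_subset_right).bijOn_image

end OddRosenParams

end Bijectivity

section Orbits

variable {h : ℕ} {lam ρ : ℝ}

lemma iUnion_add_eq_two_mul {X : Type*} (h : ℕ) (C : ℕ → ℕ → Set X) :
    ⋃ (j) (k) (_ : j + k = 2 * h), C j k =
      (⋃ m ∈ Finset.Icc 1 h, C (2 * (h - m) + 2) (2 * (m - 1)))
      ∪ (⋃ m ∈ Finset.Icc 1 h, C (2 * (h - m) + 1) (2 * m - 1)) ∪ C 0 (2 * h) := by
  ext z
  simp only [mem_union, mem_iUnion, Finset.mem_Icc, exists_prop]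
  constructor
  · rintro ⟨j, k, hjk, hz⟩
    obtain ⟨m, rfl | rfl⟩ := Nat.even_or_odd' k
    · obtain rfl | hj := j.eq_zero_or_pos
      · rw [zero_add] at hjk
        exact Or.inr (hjk ▸ hz)
      · refine Or.inl (Or.inl ⟨m + 1, by lia, ?_⟩)
        rwa [Nat.add_sub_cancel, show 2 * (h - (m + 1)) + 2 = j by lia]
    · refine Or.inl (Or.inr ⟨m + 1, by lia, ?_⟩)
      rwa [show 2 * (h - (m + 1)) + 1 = j by lia, show 2 * (m + 1) - 1 = 2 * m + 1 by lia]
  · rintro ((⟨m, hm, hz⟩ | ⟨m, hm, hz⟩) | hz)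
    all_goals exact ⟨_, _, by lia, hz⟩

namespace OddRosenParams

lemma neg_negCut_mem_Ico (P : OddRosenParams h lam ρ) {k : ℕ} (hk : k ∈ Icc 1 (2 * h + 1)) :
    -negCut lam ρ k ∈ Ico (ρ - lam) ρ := by
  have hρ := P.rho_pos
  have hle : negCut lam ρ k ≤ lam - ρ := P.negCut_two_mul_self_add_one ▸
    P.negCut_monotoneOn (mem_Iic.2 hk.2) self_mem_Iic hk.2
  have hge : 1 / (2 + ρ) ≤ negCut lam ρ k :=
    P.negCut_monotoneOn (mem_Iic.2 (by lia)) (mem_Iic.2 hk.2) hk.1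
  have hpos : 0 < 1 / (2 + ρ) := by positivity
  constructor <;> linarith

lemma Tmap_neg_negCut_add_two (P : OddRosenParams h lam ρ) {k : ℕ} (hk : 1 ≤ k) (hk' : k < 2 * h) :
    Tmap lam (ρ / lam) (-negCut lam ρ (k + 2)) = -negCut lam ρ k := by
  have hpos : 0 < lam - negCut lam ρ k := sub_pos.2 (P.negCut_lt hk')
  have hcut : negCut lam ρ (k + 2) = 1 / (lam - negCut lam ρ k) := rfl
  have hinv : |1 / -negCut lam ρ (k + 2)| - lam * (1 : ℤ) = -negCut lam ρ k := by
    rw [hcut, abs_one_div, abs_neg, abs_one_div, one_div_one_div, abs_of_pos hpos, Int.cast_one]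
    ring
  rw [Tmap_eq P.lam_pos (d := 1), hinv]
  · rw [hcut]
    exact neg_ne_zero.2 (one_div_pos.2 hpos).ne'
  · rw [hinv]
    exact P.neg_negCut_mem_Ico ⟨hk, by lia⟩

lemma Tmap_rho (P : OddRosenParams h lam ρ) (hh : 1 ≤ h) :
    Tmap lam (ρ / lam) ρ = -negCut lam ρ (2 * h) := by
  have hinv : |1 / ρ| - lam * (1 : ℤ) = -negCut lam ρ (2 * h) := by
    rw [P.negCut_two_mul_self, abs_of_pos (one_div_pos.2 P.rho_pos), Int.cast_one]
    ring
  rw [Tmap_eq P.lam_pos P.rho_pos.ne' (d := 1), hinv]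
  rw [hinv]
  exact P.neg_negCut_mem_Ico ⟨by lia, by lia⟩

lemma iterate_Tmap_rho_sub_lam (P : OddRosenParams h lam ρ) {i j : ℕ} (hij : i + j = h) :
    (Tmap lam (ρ / lam))^[i] (ρ - lam) = -negCut lam ρ (2 * j + 1) := by
  induction i generalizing j with
  | zero =>
    obtain rfl : j = h := by lia
    rw [Function.iterate_zero_apply, P.negCut_two_mul_self_add_one, neg_sub]
  | succ i ih =>
    rw [Function.iterate_succ_apply', ih (j := j + 1) (by lia)]
    exact P.Tmap_neg_negCut_add_two (by lia) (by lia)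

lemma iterate_succ_Tmap_rho (P : OddRosenParams h lam ρ) {i j : ℕ} (hij : i + j = h) (hj : 1 ≤ j) :
    (Tmap lam (ρ / lam))^[i + 1] ρ = -negCut lam ρ (2 * j) := by
  induction i generalizing j with
  | zero =>
    obtain rfl : j = h := by lia
    exact P.Tmap_rho hj
  | succ i ih =>
    rw [Function.iterate_succ_apply', ih (j := j + 1) (by lia) (by lia)]
    exact P.Tmap_neg_negCut_add_two (by lia) (by lia)

lemma mem_staircase_iff_exists_cell (P : OddRosenParams h lam ρ) {z : ℝ × ℝ} :
    z ∈ staircase h lam ρ ↔ ∃ j k, j + k = 2 * h ∧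
      z.1 ∈ Ico (-negCut lam ρ (j + 1)) (-negCut lam ρ j) ∧
      z.2 ∈ Icc 0 (fibreHeight lam (k + 1)) := by
  classical
  constructor
  · rintro ⟨j, k, hjk, ⟨hj, hρ⟩, hy0, hk⟩
    have hex : ∃ i, -negCut lam ρ (i + 1) ≤ z.1 := ⟨j, hj⟩
    have hfind : Nat.find hex ≤ j := Nat.find_min' hex hj
    refine ⟨Nat.find hex, 2 * h - Nat.find hex, by lia, ⟨Nat.find_spec hex, ?_⟩, hy0, hk.trans ?_⟩
    · rcases hi : Nat.find hex with _ | i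
      · simpa [negCut, ladder] using hρ
      · exact not_le.1 (Nat.find_min hex (by lia))
    · exact P.fibreHeight_monotoneOn (mem_Iic.2 (by lia)) (mem_Iic.2 (by lia)) (by lia)
  · rintro ⟨j, k, hjk, ⟨hj, hj'⟩, hy⟩
    have hle : -ρ ≤ negCut lam ρ j :=
      P.negCut_monotoneOn (mem_Iic.2 (Nat.zero_le _)) (mem_Iic.2 (by lia)) (Nat.zero_le j)
    exact ⟨j, k, hjk, ⟨hj, by linarith⟩, hy⟩

lemma staircase_eq_iUnion (P : OddRosenParams h lam ρ) {ℓ r : ℕ → ℝ}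
    (hℓ : ∀ n, ℓ n = (Tmap lam (ρ / lam))^[n] (ρ - lam))
    (hr : ∀ n, r n = (Tmap lam (ρ / lam))^[n] ρ) :
    staircase h lam ρ =
      (⋃ j ∈ Finset.Icc 1 h, Ico (ℓ (j - 1)) (r j) ×ˢ
        Icc 0 ((rosenB lam (j - 1) + rosenB lam j) / (rosenB lam j + rosenB lam (j + 1))))
      ∪ (⋃ j ∈ Finset.Icc 1 h,
        Ico (r j) (ℓ j) ×ˢ Icc 0 (rosenB lam j / rosenB lam (j + 1)))
      ∪ Ico (ℓ h) ρ ×ˢ Icc 0 (lam / 2) := by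
  have hcells := iUnion_add_eq_two_mul h fun j k =>
    Ico (-negCut lam ρ (j + 1)) (-negCut lam ρ j) ×ˢ Icc 0 (fibreHeight lam (k + 1))
  refine (Set.ext fun z => ?_ : staircase h lam ρ = _).trans (hcells.trans ?_)
  · simp only [P.mem_staircase_iff_exists_cell, mem_iUnion, exists_prop, mem_prod]
  congr 1
  · congr 1 <;> refine iUnion₂_congr fun j hj => ?_
    all_goals obtain ⟨hj₁, hjh⟩ := Finset.mem_Icc.1 hj
    all_goals obtain ⟨m, rfl⟩ := Nat.exists_eq_add_of_le' hj₁
    · rw [Nat.add_sub_cancel, hℓ, hr,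
        P.iterate_Tmap_rho_sub_lam (j := h - (m + 1) + 1) (by lia),
        P.iterate_succ_Tmap_rho (j := h - (m + 1) + 1) (by lia) (by lia),
        P.fibreHeight_two_mul_add_one (by lia), mul_add_one 2 (h - (m + 1))]
    · rw [hℓ, hr, P.iterate_Tmap_rho_sub_lam (j := h - (m + 1)) (by lia),
        P.iterate_succ_Tmap_rho (j := h - (m + 1) + 1) (by lia) (by lia),
        Nat.sub_add_cancel (by lia), P.fibreHeight_two_mul (by lia), mul_add_one 2 (h - (m + 1))]
  · rw [hℓ, P.iterate_Tmap_rho_sub_lam (add_zero h), P.fibreHeight_two_mul_self_add_one]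
    simp only [negCut, ladder, neg_neg]

end OddRosenParams

end Orbits

section Trigonometry

variable {h q : ℕ} {lam ρ : ℝ}

lemma sin_mul_pi_div_pos {n : ℕ} (hn : 0 < n) (hnq : n < q) :
    0 < Real.sin (n * (Real.pi / q)) := by
  have hq : 0 < q := hn.trans hnq
  refine Real.sin_pos_of_pos_of_lt_pi (by positivity) ?_
  rw [mul_div_left_comm]
  exact mul_lt_of_lt_one_right Real.pi_pos ((div_lt_one (by positivity)).2 (by exact_mod_cast hnq))

lemma sin_pi_div_pos (hq : 1 < q) : 0 < Real.sin (Real.pi / q) := by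
  simpa only [Nat.cast_one, one_mul] using sin_mul_pi_div_pos one_pos hq

lemma rosenB_two_mul_cos_pi_div_pos {n : ℕ} (hn : 0 < n) (hnq : n < q) :
    0 < rosenB (2 * Real.cos (Real.pi / q)) n := by
  have hsin := sin_pi_div_pos (hnq.trans_le' hn)
  rw [rosenB_two_mul_cos hsin.ne']
  exact div_pos (sin_mul_pi_div_pos hn hnq) hsin

lemma rosenB_two_mul_cos_pi_div_eq {m n : ℕ} (hm : 0 < m) (hn : 0 < n) (hmn : m + n = q) :
    rosenB (2 * Real.cos (Real.pi / q)) m = rosenB (2 * Real.cos (Real.pi / q)) n := by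
  have hq : (q : ℝ) ≠ 0 := by exact_mod_cast (by lia : q ≠ 0)
  have hsum : m * (Real.pi / q) = Real.pi - n * (Real.pi / q) := by
    rw [eq_sub_iff_add_eq, ← add_mul, ← Nat.cast_add, hmn, mul_div_cancel₀ _ hq]
  have hsin := sin_pi_div_pos (q := q) (by lia)
  rw [rosenB_two_mul_cos hsin.ne', rosenB_two_mul_cos hsin.ne', hsum, Real.sin_pi_sub]

lemma OddRosenParams.of_two_mul_cos (hq : q = 2 * h + 3) (hlam : lam = 2 * Real.cos (Real.pi / q))
    (hρ : ρ = (lam - 2 + Real.sqrt (lam ^ 2 - 4 * lam + 8)) / 2) : OddRosenParams h lam ρ := by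
  have hlam_lt : lam < 2 := by
    have hcos := Real.cos_lt_cos_of_nonneg_of_le_pi (x := 0) (y := Real.pi / q) le_rfl
      (div_le_self Real.pi_pos.le (by exact_mod_cast (by lia : 1 ≤ q)))
      (div_pos Real.pi_pos (by exact_mod_cast (by lia : 0 < q)))
    rw [Real.cos_zero] at hcos
    linarith
  have hsq : Real.sqrt (lam ^ 2 - 4 * lam + 8) ^ 2 = lam ^ 2 - 4 * lam + 8 :=
    Real.sq_sqrt (by nlinarith [sq_nonneg (lam - 2)])
  exact
    { lam_lt_two := hlam_lt
      rho_pos := by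
        have hlt : 2 - lam < Real.sqrt (lam ^ 2 - 4 * lam + 8) :=
          Real.lt_sqrt_of_sq_lt (by linarith)
        linarith
      rho_sq := by
        rw [hρ]
        linear_combination hsq / 4
      rosenB_pos := fun n hn => hlam ▸ rosenB_two_mul_cos_pi_div_pos n.succ_pos (by lia)
      rosenB_mid := hlam ▸ rosenB_two_mul_cos_pi_div_eq (h.succ_pos) (by lia) (by lia) }

end Trigonometry

-- The additional case `h = 0` is Nakada's natural extension of the regular `α`-continued fraction
-- with `α = (√5 - 1) / 2`, whose domain is a single rectangle.
theorem stmt16_general (h q : ℕ) (hq : q = 2 * h + 3) (lam α ρ : ℝ)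
    (hlam : lam = 2 * Real.cos (Real.pi / q))
    (hρ : ρ = (lam - 2 + Real.sqrt (lam ^ 2 - 4 * lam + 8)) / 2)
    (hα : α = ρ / lam)
    (B : ℕ → ℝ)
    (hB : ∀ n : ℕ, B n = Real.sin (n * Real.pi / q) / Real.sin (Real.pi / q))
    (ℓ r : ℕ → ℝ)
    (hℓ : ∀ n, ℓ n = (Tmap lam α)^[n] ((α - 1) * lam))
    (hr : ∀ n, r n = (Tmap lam α)^[n] (α * lam))
    (Ω : Set (ℝ × ℝ))
    (hΩ : Ω = (⋃ j ∈ Finset.Icc 1 h,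
        Ico (ℓ (j - 1)) (r j) ×ˢ Icc (0 : ℝ) ((B (j - 1) + B j) / (B j + B (j + 1))))
      ∪ (⋃ j ∈ Finset.Icc 1 h, Ico (r j) (ℓ j) ×ˢ Icc (0 : ℝ) (B j / B (j + 1)))
      ∪ Ico (ℓ h) ρ ×ˢ Icc (0 : ℝ) (lam / 2)) :
    ∃ N N' : Set (ℝ × ℝ), N ⊆ Ω ∧ N' ⊆ Ω ∧ volume N = 0 ∧ volume N' = 0 ∧
      Set.BijOn (Tnat lam α) (Ω \ N) (Ω \ N') := by
  have P : OddRosenParams h lam ρ := .of_two_mul_cos hq hlam hρ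
  subst hα
  have hright : ρ / lam * lam = ρ := div_mul_cancel₀ _ P.lam_pos.ne'
  have hleft : (ρ / lam - 1) * lam = ρ - lam := by rw [sub_one_mul, hright]
  obtain rfl : B = rosenB lam := funext fun n => by
    rw [hB, hlam, rosenB_two_mul_cos (sin_pi_div_pos (by lia)).ne', mul_div_assoc]
  simp only [hleft] at hℓ
  simp only [hright] at hr
  rw [hΩ, ← P.staircase_eq_iUnion hℓ hr]
  exact P.exists_bijOn_staircase

/-- Theorem 2.14: for odd `q = 2h+3` and `α = ρ/λ`, the natural extension map `𝒯_ρ`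
is a bijection of `Ω_ρ` off of a set of two-dimensional Lebesgue measure zero. -/
theorem stmt16 (h q : ℕ) (hh : 1 ≤ h) (hq : q = 2 * h + 3) (lam α ρ : ℝ)
    (hlam : lam = 2 * Real.cos (Real.pi / q))
    (hρ : ρ = (lam - 2 + Real.sqrt (lam ^ 2 - 4 * lam + 8)) / 2)
    (hα : α = ρ / lam)
    (B : ℕ → ℝ)
    (hB : ∀ n : ℕ, B n = Real.sin (n * Real.pi / q) / Real.sin (Real.pi / q))
    (ℓ r : ℕ → ℝ)
    (hℓ : ∀ n, ℓ n = (Tmap lam α)^[n] ((α - 1) * lam))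
    (hr : ∀ n, r n = (Tmap lam α)^[n] (α * lam))
    (Ω : Set (ℝ × ℝ))
    (hΩ : Ω = (⋃ j ∈ Finset.Icc 1 h,
        Ico (ℓ (j - 1)) (r j) ×ˢ Icc (0 : ℝ) ((B (j - 1) + B j) / (B j + B (j + 1))))
      ∪ (⋃ j ∈ Finset.Icc 1 h, Ico (r j) (ℓ j) ×ˢ Icc (0 : ℝ) (B j / B (j + 1)))
      ∪ Ico (ℓ h) ρ ×ˢ Icc (0 : ℝ) (lam / 2)) :
    ∃ N N' : Set (ℝ × ℝ), N ⊆ Ω ∧ N' ⊆ Ω ∧ volume N = 0 ∧ volume N' = 0 ∧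
      Set.BijOn (Tnat lam α) (Ω \ N) (Ω \ N') :=
  stmt16_general h q hq lam α ρ hlam hρ hα B hB ℓ r hℓ hr Ω hΩ
end

section
/- Let q ≥ 3 be an integer, λ = 2cos(π/q), and 1/2 ≤ α ≤ 1/λ. Let x ∈ [λ(α−1), αλ] be such that T_α^n(x) ≠ 0 for all n ≥ 0, and let ε_n = sgn(T_α^{n−1}(x)), d_n = d(T_α^{n−1}(x)), and define R_{−1} = 1, R_0 = 0, R_n = d_n λ R_{n−1} + ε_n R_{n−2}, S_{−1} = 0, S_0 = 1, S_n = d_n λ S_{n−1} + ε_n S_{n−2} for n ≥ 1. Then for every n ≥ 1, |x − R_n/S_n| ≤ αλ/((1 + αλ − λ)·S_n²); in particular the α-Rosen convergents R_n/S_n converge to x as n → ∞. -/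
open Set MeasureTheory

/-!
Write `tₙ = T_αⁿ x`, `Vₙ = Sₙ₋₁ / Sₙ` and `δₙ = Sₙ₋₁ x - Rₙ₋₁`. The recurrences give
`δₙ₊₁ = -tₙ δₙ` and `|Sₙ (1 + tₙ Vₙ) δₙ| = 1`, whence `|x - Rₙ/Sₙ| = |tₙ| / ((1 + tₙ Vₙ) Sₙ²)` and
also `|x - Rₙ/Sₙ| = |tₙ| (1 + tₙ Vₙ) δₙ²`. The first formula reduces the bound to a lower bound for
`1 + tₙ Vₙ`, the second, with `|tₙ tₙ₊₁| ≤ λ/2`, reduces convergence to the boundedness of `Vₙ`.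

Both follow once the orbit `(tₙ, Vₙ)` of the natural extension is confined. The only digit that
can enlarge `V` beyond `1/λ` is `ε = -1`, `d = 1`, which acts on `(s, V) = (-t, V)` as
`s ↦ λ - 1/s` and `V ↦ 1/(λ - V)`, that is by a rotation and its inverse. Such a pair of maps
preserves the graph of any reflection reversing the rotation; the reflection that
exchanges `λ/2` and `1/λ` bounds the required region.
-/

namespace AlphaRosen

open Filter Topology

section Convergents

variable {K : Type*}

section CommRing

variable [CommRing K] {t b ε p q u : ℕ → K}

/-- The three-term recurrence of a continued fraction with partial numerators `ε` and partial
denominators `b`. Indices are shifted by one: `u 0` and `u 1` are the terms of index `-1`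
and `0`. -/
def IsContinuant (b ε u : ℕ → K) : Prop :=
  ∀ n, u (n + 2) = b n * u (n + 1) + ε n * u n

/-- `p n / q n` is the convergent of index `n - 1` of the continued fraction with partial
numerators `ε` and partial denominators `b`. -/
structure IsConvergents (b ε p q : ℕ → K) : Prop where
  num : IsContinuant b ε p
  num_zero : p 0 = 1
  num_one : p 1 = 0
  den : IsContinuant b ε q
  den_zero : q 0 = 0
  den_one : q 1 = 1

lemma IsContinuant.mul_sub (hq : IsContinuant b ε q) (hp : IsContinuant b ε p) (x : K) :
    IsContinuant b ε fun n => q n * x - p n := by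
  intro n
  linear_combination x * hq n - hp n

lemma IsContinuant.succ_eq_neg_mul (hu : IsContinuant b ε u)
    (ht : ∀ n, t n * (t (n + 1) + b n) = ε n) (h : u 1 = -t 0 * u 0) (n : ℕ) :
    u (n + 1) = -t n * u n := by
  induction n with
  | zero => exact h
  | succ n ih => linear_combination hu n + (b n + t (n + 1)) * ih - u n * ht n

lemma IsContinuant.mul_succ_add_mul (hu : IsContinuant b ε u)
    (ht : ∀ n, t n * (t (n + 1) + b n) = ε n) (n : ℕ) :
    t n * (u (n + 2) + t (n + 1) * u (n + 1)) = ε n * (u (n + 1) + t n * u n) := by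
  linear_combination t n * hu n + u (n + 1) * ht n

lemma IsConvergents.residual_succ (h : IsConvergents b ε p q)
    (ht : ∀ n, t n * (t (n + 1) + b n) = ε n) (n : ℕ) :
    q (n + 1) * t 0 - p (n + 1) = -t n * (q n * t 0 - p n) :=
  (h.den.mul_sub h.num (t 0)).succ_eq_neg_mul ht
    (by simp [h.num_zero, h.num_one, h.den_zero, h.den_one]) n

variable [LinearOrder K] [IsStrictOrderedRing K]

lemma IsConvergents.abs_mul_residual (h : IsConvergents b ε p q)
    (ht : ∀ n, t n * (t (n + 1) + b n) = ε n) (hε : ∀ n, |ε n| = 1) (n : ℕ) :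
    |(q (n + 1) + t n * q n) * (q n * t 0 - p n)| = 1 := by
  induction n with
  | zero => simp [h.num_zero, h.den_zero, h.den_one]
  | succ n ih =>
    have hsucc : (q (n + 2) + t (n + 1) * q (n + 1)) * (q (n + 1) * t 0 - p (n + 1)) =
        -ε n * ((q (n + 1) + t n * q n) * (q n * t 0 - p n)) := by
      rw [h.residual_succ ht n]
      linear_combination (-(q n * t 0 - p n)) * h.den.mul_succ_add_mul ht n
    rw [hsucc, abs_mul, abs_neg, hε, ih, one_mul]

end CommRing

section Field

variable [Field K] {t b ε p q u : ℕ → K}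

lemma IsContinuant.add_two_eq_mul (hu : IsContinuant b ε u) {n : ℕ} (h : u (n + 1) ≠ 0) :
    u (n + 2) = (b n + ε n * (u n / u (n + 1))) * u (n + 1) := by
  rw [hu n]
  field_simp

variable [LinearOrder K] [IsStrictOrderedRing K]

lemma IsConvergents.abs_den_mul_residual (h : IsConvergents b ε p q)
    (ht : ∀ n, t n * (t (n + 1) + b n) = ε n) (hε : ∀ n, |ε n| = 1) {n : ℕ}
    (hq : q (n + 1) ≠ 0) :
    |q (n + 1)| * |1 + t n * (q n / q (n + 1))| * |q n * t 0 - p n| = 1 := by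
  rw [← abs_mul, ← abs_mul, mul_add, mul_one, mul_left_comm, mul_div_cancel₀ _ hq]
  exact h.abs_mul_residual ht hε n

lemma IsConvergents.abs_sub_div_eq_mul_sq (h : IsConvergents b ε p q)
    (ht : ∀ n, t n * (t (n + 1) + b n) = ε n) (hε : ∀ n, |ε n| = 1) {n : ℕ}
    (hq : q (n + 1) ≠ 0) :
    |t 0 - p (n + 1) / q (n + 1)| =
      |t n| * |1 + t n * (q n / q (n + 1))| * (q n * t 0 - p n) ^ 2 := by
  have hunit := h.abs_den_mul_residual ht hε hq
  have hsub : t 0 - p (n + 1) / q (n + 1) = -t n * (q n * t 0 - p n) / q (n + 1) := by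
    rw [← h.residual_succ ht n]
    field_simp
  rw [hsub, abs_div, abs_mul, abs_neg, div_eq_iff (abs_ne_zero.mpr hq), ← sq_abs (q n * t 0 - p n)]
  linear_combination (-(|t n| * |q n * t 0 - p n|)) * hunit

lemma IsConvergents.abs_sub_div_eq_div_sq (h : IsConvergents b ε p q)
    (ht : ∀ n, t n * (t (n + 1) + b n) = ε n) (hε : ∀ n, |ε n| = 1) {n : ℕ}
    (hq : q (n + 1) ≠ 0) :
    |t 0 - p (n + 1) / q (n + 1)| =
      |t n| / (|1 + t n * (q n / q (n + 1))| * q (n + 1) ^ 2) := by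
  have hunit := h.abs_den_mul_residual ht hε hq
  have hw : |1 + t n * (q n / q (n + 1))| ≠ 0 :=
    right_ne_zero_of_mul (left_ne_zero_of_mul_eq_one hunit)
  have hq2 := pow_ne_zero 2 hq
  rw [h.abs_sub_div_eq_mul_sq ht hε hq, eq_div_iff (mul_ne_zero hw hq2),
    ← sq_abs (q n * t 0 - p n), ← sq_abs (q (n + 1))]
  linear_combination |t n| *
    (|q (n + 1)| * |1 + t n * (q n / q (n + 1))| * |q n * t 0 - p n| + 1) * hunit

end Field

end Convergents

lemma tendsto_zero_of_norm_add_two_le {E : Type*} [SeminormedAddCommGroup E] {u : ℕ → E}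
    {c : ℝ} (hc0 : 0 ≤ c) (hc1 : c < 1) (h : ∀ n, ‖u (n + 2)‖ ≤ c * ‖u n‖) :
    Tendsto u atTop (𝓝 0) := by
  have hbound : ∀ n, ‖u n‖ ≤ c ^ (n / 2) * max ‖u 0‖ ‖u 1‖ := by
    intro n
    induction n using Nat.twoStepInduction with
    | zero => simp
    | one => simp
    | more n ih _ =>
      calc ‖u (n + 2)‖ ≤ c * ‖u n‖ := h n
        _ ≤ c * (c ^ (n / 2) * max ‖u 0‖ ‖u 1‖) := by gcongr
        _ = c ^ ((n + 2) / 2) * max ‖u 0‖ ‖u 1‖ := by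
          rw [Nat.add_div_right n two_pos, pow_succ']
          ring
  have hpow : Tendsto (fun n : ℕ => c ^ (n / 2)) atTop (𝓝 0) :=
    (tendsto_pow_atTop_nhds_zero_of_lt_one hc0 hc1).comp
      (Nat.tendsto_div_const_atTop two_ne_zero)
  exact squeeze_zero_norm hbound (by simpa using hpow.mul_const (max ‖u 0‖ ‖u 1‖))

section Arc

variable {lam s V : ℝ}

/-- The points `(s, V)` on or below the arc `λ(s + V) = 2 + (λ² - 2)sV` through `(λ/2, 1/λ)`,
which is the graph of a reflection conjugating the rotation `s ↦ λ - 1/s` to its inverse. -/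
def UnderArc (lam s V : ℝ) : Prop :=
  lam * (s + V) ≤ 2 + (lam ^ 2 - 2) * s * V

lemma UnderArc.rotate (h : UnderArc lam s V) (hs : 0 < s) (hV : V < lam) :
    UnderArc lam (lam - 1 / s) (1 / (lam - V)) := by
  have hV' : 0 < lam - V := sub_pos.mpr hV
  have hgap : 2 + (lam ^ 2 - 2) * (lam - 1 / s) * (1 / (lam - V)) -
      lam * (lam - 1 / s + 1 / (lam - V)) =
      (2 + (lam ^ 2 - 2) * s * V - lam * (s + V)) / (s * (lam - V)) := by
    field_simp
    ring
  exact sub_nonneg.mp (hgap ▸ div_nonneg (sub_nonneg.mpr h) (mul_pos hs hV').le)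

lemma underArc_of_mul_le_one (h0 : 0 < lam) (h2 : lam < 2) (hs : s ≤ lam / 2) (hV0 : 0 ≤ V)
    (hV : lam * V ≤ 1) : UnderArc lam s V := by
  have hslope : 0 ≤ lam - (lam ^ 2 - 2) * V := by
    nlinarith [mul_le_mul_of_nonneg_left hV h0.le]
  have hend : 0 ≤ (4 - lam ^ 2) * (1 - lam * V) :=
    mul_nonneg (by nlinarith) (by linarith)
  unfold UnderArc
  nlinarith [mul_nonneg (sub_nonneg.mpr hs) hslope]

lemma arc_coeff_pos (h0 : 0 < lam) (h2 : lam < 2) (hs0 : 0 < s) (hs : s ≤ lam / 2) :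
    0 < lam - (lam ^ 2 - 2) * s := by
  have h4 : 0 < 4 - lam ^ 2 := by nlinarith
  nlinarith [mul_pos hs0 h4]

lemma UnderArc.le_one (h : UnderArc lam s V) (h0 : 0 < lam) (h2 : lam < 2) (hs : s ≤ lam / 2)
    (hs1 : 1 ≤ s * (lam + 1)) : V ≤ 1 := by
  have hs0 : 0 < s := by nlinarith
  refine le_of_mul_le_mul_right ?_ (arc_coeff_pos h0 h2 hs0 hs)
  unfold UnderArc at h
  nlinarith [mul_nonneg (sub_nonneg.mpr h2.le) (sub_nonneg.mpr hs1)]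

lemma UnderArc.le_half (h : UnderArc lam s V) (h0 : 0 < lam) (h2 : lam < 2) (hs : s ≤ lam / 2)
    (hs1 : 1 ≤ s * lam) : V ≤ lam / 2 := by
  have hs0 : 0 < s := by nlinarith
  have h4 : 0 ≤ 4 - lam ^ 2 := by nlinarith
  refine le_of_mul_le_mul_right ?_ (arc_coeff_pos h0 h2 hs0 hs)
  unfold UnderArc at h
  nlinarith [mul_nonneg h4 (sub_nonneg.mpr hs1)]

lemma UnderArc.mul_add_le_one (h : UnderArc lam s V) (h0 : 0 < lam) (h2 : lam < 2) (hs0 : 0 < s)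
    (hs : s ≤ lam / 2) : s * (2 - lam + V) ≤ 1 := by
  have hsq : ((2 - lam) * s) ^ 2 ≤ (lam * (1 - s)) ^ 2 :=
    pow_le_pow_left₀ (mul_nonneg (by linarith) hs0.le) (by linarith) 2
  have hcubic : 0 ≤ (2 - lam) * s ^ 2 * ((lam - 1) ^ 2 * (lam + 2)) :=
    mul_nonneg (mul_nonneg (by linarith) (sq_nonneg s))
      (mul_nonneg (sq_nonneg _) (by linarith))
  have hquad : 0 ≤ lam * (1 - s) ^ 2 + (2 - lam) * (lam ^ 2 - 2) * s ^ 2 := by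
    refine nonneg_of_mul_nonneg_right (a := lam) ?_ h0
    linarith
  have hV : s * (V * (lam - (lam ^ 2 - 2) * s)) ≤ s * (2 - lam * s) := by
    unfold UnderArc at h
    exact mul_le_mul_of_nonneg_left (by linarith) hs0.le
  refine le_of_mul_le_mul_right ?_ (arc_coeff_pos h0 h2 hs0 hs)
  linarith

end Arc

section Map

variable {lam α t : ℝ}

lemma Tmap_mem_Ico (h0 : 0 < lam) (ht : t ≠ 0) :
    Tmap lam α t ∈ Ico (lam * (α - 1)) (α * lam) := by
  have hT : Tmap lam α t = lam * (|1 / (t * lam)| - dfun lam α t) := by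
    rw [Tmap, if_neg ht, mul_sub, ← div_div, abs_div (1 / t) lam, abs_of_pos h0,
      mul_div_cancel₀ _ h0.ne']
  have hle : (dfun lam α t : ℝ) ≤ |1 / (t * lam)| + 1 - α := Int.floor_le _
  have hlt : |1 / (t * lam)| + 1 - α < dfun lam α t + 1 := Int.lt_floor_add_one _
  rw [hT, mul_comm α]
  exact ⟨mul_le_mul_of_nonneg_left (by linarith) h0.le, mul_lt_mul_of_pos_left (by linarith) h0⟩

lemma one_le_dfun (h0 : 0 < lam) (hα : α * lam ≤ 1) (ht : t ≠ 0) (htα : |t| ≤ α * lam) :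
    1 ≤ dfun lam α t := by
  have hpos : 0 < |t * lam| := abs_pos.mpr (mul_ne_zero ht h0.ne')
  have hle : α ≤ |1 / (t * lam)| := by
    rw [abs_div, abs_one, le_div_iff₀ hpos, abs_mul, abs_of_pos h0]
    nlinarith [abs_nonneg t]
  rw [dfun, Int.le_floor, Int.cast_one]
  linarith

lemma mul_Tmap_add (ht : t ≠ 0) :
    t * (Tmap lam α t + dfun lam α t * lam) = Real.sign t := by
  rw [Tmap, if_neg ht, mul_comm lam, sub_add_cancel, abs_div, abs_one]
  rcases ht.lt_or_gt with h | h
  · rw [Real.sign_of_neg h, abs_of_neg h]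
    field_simp
  · rw [Real.sign_of_pos h, abs_of_pos h]
    field_simp

lemma abs_sign_eq_one (ht : t ≠ 0) : |Real.sign t| = 1 := by
  rcases Real.sign_apply_eq_of_ne_zero t ht with h | h <;> simp [h]

lemma abs_le_of_mem_Icc (h0 : 0 ≤ lam) (hα1 : 1 / 2 ≤ α)
    (ht : t ∈ Icc (lam * (α - 1)) (α * lam)) : |t| ≤ α * lam :=
  abs_le.mpr ⟨by nlinarith [ht.1], ht.2⟩

lemma neg_le_half_of_mem_Icc (h0 : 0 ≤ lam) (hα1 : 1 / 2 ≤ α)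
    (ht : t ∈ Icc (lam * (α - 1)) (α * lam)) : -t ≤ lam / 2 := by
  nlinarith [ht.1]

lemma abs_Tmap_mul_le (h1 : 1 ≤ lam) (hα1 : 1 / 2 ≤ α) (hα2 : α * lam ≤ 1) (ht0 : t ≠ 0)
    (ht : t ∈ Icc (lam * (α - 1)) (α * lam)) : |Tmap lam α t * t| ≤ lam / 2 := by
  have h0 : 0 < lam := by linarith
  have hT := Ico_subset_Icc_self (Tmap_mem_Ico (α := α) h0 ht0)
  have htα := abs_le_of_mem_Icc h0.le hα1 ht
  rw [abs_mul]
  rcases lt_or_ge (Tmap lam α t) 0 with hneg | hnonneg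
  · have hhalf := neg_le_half_of_mem_Icc h0.le hα1 hT
    rw [abs_of_neg hneg]
    nlinarith [abs_nonneg t]
  · have hd : (1 : ℝ) ≤ dfun lam α t := by exact_mod_cast one_le_dfun h0 hα2 ht0 htα
    have hsum : (Tmap lam α t + dfun lam α t * lam) * |t| = 1 := by
      rw [← abs_sign_eq_one ht0, ← mul_Tmap_add (lam := lam) (α := α) ht0, abs_mul, mul_comm,
        abs_of_nonneg (by positivity : 0 ≤ Tmap lam α t + dfun lam α t * lam)]
    rw [abs_of_nonneg hnonneg]
    have hle_abs : Tmap lam α t * |t| ≤ |t| :=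
      mul_le_of_le_one_left (abs_nonneg t) (hT.2.trans hα2)
    have hle_sub : Tmap lam α t * |t| ≤ 1 - |t| := by
      nlinarith [abs_nonneg t, mul_le_mul hd h1 zero_le_one (by linarith)]
    linarith

end Map

section NaturalExtension

variable {lam α : ℝ} {z : ℝ × ℝ}

/-- A region containing the orbit `(T_αⁿ x, Sₙ₋₁ / Sₙ)` of `(x, 0)` under the natural extension.
The arc only matters at negative `T_αⁿ x`, and `7` is merely a convenient uniform bound. -/
structure MemRegion (lam α : ℝ) (z : ℝ × ℝ) : Prop where
  fst_mem : z.1 ∈ Icc (lam * (α - 1)) (α * lam)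
  snd_nonneg : 0 ≤ z.2
  snd_le : z.2 ≤ 7
  snd_le_of_neg : z.1 < 0 → z.2 ≤ lam
  underArc_of_neg : z.1 < 0 → UnderArc lam (-z.1) z.2

lemma memRegion_of_mul_le_one (h1 : 1 ≤ lam) (h2 : lam < 2) (hα1 : 1 / 2 ≤ α)
    (hz1 : z.1 ∈ Icc (lam * (α - 1)) (α * lam)) (hz2 : 0 ≤ z.2) (hz : lam * z.2 ≤ 1) :
    MemRegion lam α z where
  fst_mem := hz1
  snd_nonneg := hz2
  snd_le := by nlinarith
  snd_le_of_neg _ := by nlinarith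
  underArc_of_neg _ := underArc_of_mul_le_one (by linarith) h2
    (neg_le_half_of_mem_Icc (by linarith) hα1 hz1) hz2 hz

/-- The denominator of the second coordinate of the natural extension, so that
`Sₙ₊₁ = natDen lam α (T_αⁿ x, Sₙ₋₁ / Sₙ) * Sₙ`. -/
noncomputable def natDen (lam α : ℝ) (z : ℝ × ℝ) : ℝ :=
  dfun lam α z.1 * lam + Real.sign z.1 * z.2

lemma MemRegion.le_natDen_or (hz : MemRegion lam α z) (h0 : 0 < lam) (hα1 : 1 / 2 ≤ α)
    (hα2 : α * lam ≤ 1) (hz0 : z.1 ≠ 0) :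
    lam ≤ natDen lam α z ∨ z.1 < 0 ∧ dfun lam α z.1 = 1 := by
  have hd := one_le_dfun h0 hα2 hz0 (abs_le_of_mem_Icc h0.le hα1 hz.fst_mem)
  unfold natDen
  rcases hz0.lt_or_gt with hneg | hpos
  · rcases hd.eq_or_lt with hd1 | hd2
    · exact .inr ⟨hneg, hd1.symm⟩
    · have hd2' : (2 : ℝ) ≤ dfun lam α z.1 := by exact_mod_cast hd2
      rw [Real.sign_of_neg hneg]
      exact .inl (by nlinarith [hz.snd_le_of_neg hneg])
  · have hd' : (1 : ℝ) ≤ dfun lam α z.1 := by exact_mod_cast hd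
    rw [Real.sign_of_pos hpos]
    exact .inl (by nlinarith [hz.snd_nonneg])

lemma Tmap_eq_of_dfun_eq_one {t : ℝ} (ht : t < 0) (hd : dfun lam α t = 1) :
    Tmap lam α t = 1 / (-t) - lam := by
  rw [Tmap, if_neg ht.ne, hd, abs_div, abs_one, abs_of_neg ht, Int.cast_one, mul_one]

lemma natDen_eq_of_dfun_eq_one (hneg : z.1 < 0) (hd : dfun lam α z.1 = 1) :
    natDen lam α z = lam - z.2 := by
  rw [natDen, Real.sign_of_neg hneg, hd]
  push_cast
  ring

lemma one_lt_neg_mul_of_dfun_eq_one {t : ℝ} (h0 : 0 < lam) (ht : t < 0)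
    (hd : dfun lam α t = 1) : 1 < -t * (α * lam + lam) := by
  have hT := (Tmap_mem_Ico (α := α) h0 ht.ne).2
  rw [Tmap_eq_of_dfun_eq_one ht hd, sub_lt_iff_lt_add, div_lt_iff₀' (neg_pos.mpr ht)] at hT
  exact hT

-- The existence of such a digit forces `4/3 < λ²`, hence `8/7 ≤ λ`.
lemma MemRegion.one_seventh_le_natDen (hz : MemRegion lam α z) (h0 : 0 < lam) (h2 : lam < 2)
    (hα1 : 1 / 2 ≤ α) (hα2 : α * lam ≤ 1) (hneg : z.1 < 0) (hd : dfun lam α z.1 = 1) :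
    1 / 7 ≤ natDen lam α z := by
  have hlt := one_lt_neg_mul_of_dfun_eq_one h0 hneg hd
  have hs := neg_le_half_of_mem_Icc h0.le hα1 hz.fst_mem
  have hV : z.2 ≤ 1 := (hz.underArc_of_neg hneg).le_one h0 h2 hs (by nlinarith)
  have hsq : 4 / 3 < lam ^ 2 := by
    have hprod : -z.1 * (α * lam + lam) ≤ lam * (1 - α) * (α * lam + lam) :=
      mul_le_mul_of_nonneg_right (by linarith [hz.fst_mem.1]) (by nlinarith)
    nlinarith [mul_nonneg (sq_nonneg lam) (by nlinarith : 0 ≤ α ^ 2 - 1 / 4)]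
  rw [natDen_eq_of_dfun_eq_one hneg hd]
  nlinarith

lemma MemRegion.natDen_pos (hz : MemRegion lam α z) (h0 : 0 < lam) (h2 : lam < 2)
    (hα1 : 1 / 2 ≤ α) (hα2 : α * lam ≤ 1) (hz0 : z.1 ≠ 0) : 0 < natDen lam α z := by
  rcases hz.le_natDen_or h0 hα1 hα2 hz0 with hle | ⟨hneg, hd⟩
  · linarith
  · linarith [hz.one_seventh_le_natDen h0 h2 hα1 hα2 hneg hd]

lemma MemRegion.map_Tnat_of_dfun_eq_one (hz : MemRegion lam α z) (h0 : 0 < lam) (h2 : lam < 2)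
    (hα1 : 1 / 2 ≤ α) (hα2 : α * lam ≤ 1) (hneg : z.1 < 0) (hd : dfun lam α z.1 = 1) :
    MemRegion lam α (Tnat lam α z) := by
  have hden := hz.one_seventh_le_natDen h0 h2 hα1 hα2 hneg hd
  have hTnat : Tnat lam α z = (Tmap lam α z.1, 1 / natDen lam α z) := rfl
  rw [natDen_eq_of_dfun_eq_one hneg hd] at hden hTnat
  have hW : 0 < lam - z.2 := by linarith
  have harc := hz.underArc_of_neg hneg
  have hs := neg_le_half_of_mem_Icc h0.le hα1 hz.fst_mem
  rw [hTnat]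
  refine ⟨Ico_subset_Icc_self (Tmap_mem_Ico h0 hneg.ne), by positivity, ?_, fun hT => ?_,
    fun _ => ?_⟩
  · exact (one_div_le hW (by norm_num)).mpr hden
  · have hsl : 1 ≤ -z.1 * lam := by
      rw [Tmap_eq_of_dfun_eq_one hneg hd, sub_neg, div_lt_iff₀' (neg_pos.mpr hneg)] at hT
      exact hT.le
    have hV := harc.le_half h0 h2 hs hsl
    rw [div_le_iff₀ hW]
    nlinarith
  · rw [Tmap_eq_of_dfun_eq_one hneg hd, neg_sub]
    exact harc.rotate (neg_pos.mpr hneg) (by linarith)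

lemma MemRegion.map_Tnat (hz : MemRegion lam α z) (h1 : 1 ≤ lam) (h2 : lam < 2)
    (hα1 : 1 / 2 ≤ α) (hα2 : α * lam ≤ 1) (hz0 : z.1 ≠ 0) :
    MemRegion lam α (Tnat lam α z) := by
  have h0 : 0 < lam := by linarith
  rcases hz.le_natDen_or h0 hα1 hα2 hz0 with hle | ⟨hneg, hd⟩
  · have hpos := hz.natDen_pos h0 h2 hα1 hα2 hz0
    refine memRegion_of_mul_le_one h1 h2 hα1
      (Ico_subset_Icc_self (Tmap_mem_Ico h0 hz0)) (one_div_pos.mpr hpos).le ?_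
    change lam * (1 / natDen lam α z) ≤ 1
    rwa [mul_one_div, div_le_one hpos]
  · exact hz.map_Tnat_of_dfun_eq_one h0 h2 hα1 hα2 hneg hd

lemma MemRegion.one_add_mul_pos (hz : MemRegion lam α z) (h0 : 0 < lam) (h2 : lam < 2)
    (hα1 : 1 / 2 ≤ α) : 0 < 1 + z.1 * z.2 := by
  rcases le_or_gt 0 z.1 with hnonneg | hneg
  · linarith [mul_nonneg hnonneg hz.snd_nonneg]
  · have hkey := (hz.underArc_of_neg hneg).mul_add_le_one h0 h2 (neg_pos.mpr hneg)
      (neg_le_half_of_mem_Icc h0.le hα1 hz.fst_mem)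
    nlinarith

lemma MemRegion.abs_fst_mul_le (hz : MemRegion lam α z) (h1 : 1 ≤ lam) (h2 : lam < 2)
    (hα1 : 1 / 2 ≤ α) (hα2 : α * lam ≤ 1) :
    |z.1| * (1 + α * lam - lam) ≤ α * lam * (1 + z.1 * z.2) := by
  have h0 : 0 < lam := by linarith
  have hα0 : 0 ≤ α * lam := by nlinarith
  rcases le_or_gt 0 z.1 with hnonneg | hneg
  · rw [abs_of_nonneg hnonneg]
    have hfst : z.1 * (1 + α * lam - lam) ≤ α * lam * 1 :=
      mul_le_mul hz.fst_mem.2 (by linarith) (by nlinarith) hα0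
    nlinarith [mul_nonneg hα0 (mul_nonneg hnonneg hz.snd_nonneg)]
  · rw [abs_of_neg hneg]
    have hkey : α * lam * (-z.1 * (2 - lam + z.2)) ≤ α * lam * 1 :=
      mul_le_mul_of_nonneg_left ((hz.underArc_of_neg hneg).mul_add_le_one h0 h2
        (neg_pos.mpr hneg) (neg_le_half_of_mem_Icc h0.le hα1 hz.fst_mem)) hα0
    have hrest : 0 ≤ -z.1 * ((lam - 1) * (1 - α * lam)) :=
      mul_nonneg (by linarith) (mul_nonneg (by linarith) (by linarith))
    nlinarith

lemma MemRegion.one_add_mul_le (hz : MemRegion lam α z) (hα2 : α * lam ≤ 1) :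
    1 + z.1 * z.2 ≤ 8 := by
  nlinarith [hz.fst_mem.2, hz.snd_nonneg, hz.snd_le]

end NaturalExtension

section Expansion

variable {lam α x : ℝ} {p q : ℕ → ℝ}

/-- `p n / q n` is the `α`-Rosen convergent of `x` of index `n - 1`. -/
def IsRosenConvergents (lam α x : ℝ) (p q : ℕ → ℝ) : Prop :=
  IsConvergents (fun n => dfun lam α ((Tmap lam α)^[n] x) * lam)
    (fun n => Real.sign ((Tmap lam α)^[n] x)) p q

lemma iterate_mul_iterate_succ_add {n : ℕ} (hx : (Tmap lam α)^[n] x ≠ 0) :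
    (Tmap lam α)^[n] x * ((Tmap lam α)^[n + 1] x + dfun lam α ((Tmap lam α)^[n] x) * lam) =
      Real.sign ((Tmap lam α)^[n] x) := by
  rw [Function.iterate_succ_apply']
  exact mul_Tmap_add hx

lemma IsRosenConvergents.den_pos_and_memRegion (h : IsRosenConvergents lam α x p q)
    (h1 : 1 ≤ lam) (h2 : lam < 2) (hα1 : 1 / 2 ≤ α) (hα2 : α * lam ≤ 1)
    (hx : x ∈ Icc (lam * (α - 1)) (α * lam)) (hx0 : ∀ n, (Tmap lam α)^[n] x ≠ 0) (n : ℕ) :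
    0 < q (n + 1) ∧ MemRegion lam α ((Tmap lam α)^[n] x, q n / q (n + 1)) := by
  induction n with
  | zero =>
    simp only [zero_add, h.den_zero, h.den_one, Function.iterate_zero_apply, zero_div]
    exact ⟨one_pos, memRegion_of_mul_le_one h1 h2 hα1 hx le_rfl (by simp)⟩
  | succ n ih =>
    obtain ⟨hq, hz⟩ := ih
    have hpos := hz.natDen_pos (by linarith) h2 hα1 hα2 (hx0 n)
    have hden : q (n + 2) =
        natDen lam α ((Tmap lam α)^[n] x, q n / q (n + 1)) * q (n + 1) :=
      h.den.add_two_eq_mul hq.ne'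
    have hTnat : Tnat lam α ((Tmap lam α)^[n] x, q n / q (n + 1)) =
        ((Tmap lam α)^[n + 1] x, q (n + 1) / q (n + 2)) := by
      rw [Function.iterate_succ_apply', hden, div_mul_cancel_right₀ hq.ne', ← one_div]
      rfl
    exact ⟨hden ▸ mul_pos hpos hq, hTnat ▸ hz.map_Tnat h1 h2 hα1 hα2 (hx0 n)⟩

lemma IsRosenConvergents.abs_sub_div_le (h : IsRosenConvergents lam α x p q)
    (h1 : 1 ≤ lam) (h2 : lam < 2) (hα1 : 1 / 2 ≤ α) (hα2 : α * lam ≤ 1)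
    (hx : x ∈ Icc (lam * (α - 1)) (α * lam)) (hx0 : ∀ n, (Tmap lam α)^[n] x ≠ 0) (n : ℕ) :
    |x - p (n + 1) / q (n + 1)| ≤
      α * lam / ((1 + α * lam - lam) * q (n + 1) ^ 2) := by
  obtain ⟨hq, hz⟩ := h.den_pos_and_memRegion h1 h2 hα1 hα2 hx hx0 n
  have herr := IsConvergents.abs_sub_div_eq_div_sq (t := fun n => (Tmap lam α)^[n] x) h
    (fun n => iterate_mul_iterate_succ_add (hx0 n)) (fun n => abs_sign_eq_one (hx0 n)) hq.ne'
  have hw := hz.one_add_mul_pos (by linarith) h2 hα1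
  have hα0 : 0 < 1 + α * lam - lam := by nlinarith
  dsimp only at hw
  simp only [Function.iterate_zero_apply, abs_of_pos hw] at herr
  rw [herr, ← div_div, ← div_div]
  gcongr ?_ / _
  rw [div_le_div_iff₀ hw hα0]
  exact hz.abs_fst_mul_le h1 h2 hα1 hα2

lemma IsRosenConvergents.tendsto_residual (h : IsRosenConvergents lam α x p q)
    (h1 : 1 ≤ lam) (h2 : lam < 2) (hα1 : 1 / 2 ≤ α) (hα2 : α * lam ≤ 1)
    (hx : x ∈ Icc (lam * (α - 1)) (α * lam)) (hx0 : ∀ n, (Tmap lam α)^[n] x ≠ 0) :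
    Tendsto (fun n => q n * x - p n) atTop (𝓝 0) := by
  have hsucc : ∀ n, q (n + 1) * x - p (n + 1) = -(Tmap lam α)^[n] x * (q n * x - p n) :=
    IsConvergents.residual_succ (t := fun n => (Tmap lam α)^[n] x) h
      fun n => iterate_mul_iterate_succ_add (hx0 n)
  refine tendsto_zero_of_norm_add_two_le (c := lam / 2) (by linarith) (by linarith) fun n => ?_
  have hz := (h.den_pos_and_memRegion h1 h2 hα1 hα2 hx hx0 n).2
  calc |q (n + 2) * x - p (n + 2)|
      = |Tmap lam α ((Tmap lam α)^[n] x) * (Tmap lam α)^[n] x| * |q n * x - p n| := by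
        rw [hsucc (n + 1), hsucc n, Function.iterate_succ_apply', ← abs_mul]
        ring_nf
    _ ≤ lam / 2 * |q n * x - p n| := by
        gcongr
        exact abs_Tmap_mul_le h1 hα1 hα2 (hx0 n) hz.fst_mem

lemma IsRosenConvergents.tendsto_div (h : IsRosenConvergents lam α x p q)
    (h1 : 1 ≤ lam) (h2 : lam < 2) (hα1 : 1 / 2 ≤ α) (hα2 : α * lam ≤ 1)
    (hx : x ∈ Icc (lam * (α - 1)) (α * lam)) (hx0 : ∀ n, (Tmap lam α)^[n] x ≠ 0) :
    Tendsto (fun n => p (n + 1) / q (n + 1)) atTop (𝓝 x) := by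
  have hbound : ∀ n, |p (n + 1) / q (n + 1) - x| ≤ 8 * (q n * x - p n) ^ 2 := fun n => by
    obtain ⟨hq, hz⟩ := h.den_pos_and_memRegion h1 h2 hα1 hα2 hx hx0 n
    have herr := IsConvergents.abs_sub_div_eq_mul_sq (t := fun n => (Tmap lam α)^[n] x) h
      (fun n => iterate_mul_iterate_succ_add (hx0 n)) (fun n => abs_sign_eq_one (hx0 n)) hq.ne'
    have ht : |(Tmap lam α)^[n] x| ≤ 1 :=
      (abs_le_of_mem_Icc (by linarith) hα1 hz.fst_mem).trans hα2
    have hw0 := hz.one_add_mul_pos (by linarith) h2 hα1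
    have hw8 := hz.one_add_mul_le hα2
    dsimp only at hw0 hw8
    rw [abs_sub_comm]
    refine herr.trans_le ?_
    simp only [Function.iterate_zero_apply, abs_of_pos hw0]
    gcongr
    linarith [mul_le_of_le_one_left hw0.le ht]
  have hsq := ((h.tendsto_residual h1 h2 hα1 hα2 hx hx0).pow 2).const_mul 8
  refine tendsto_iff_norm_sub_tendsto_zero.mpr
    (squeeze_zero (fun _ => norm_nonneg _) hbound ?_)
  simpa using hsq

end Expansion

lemma isContinuant_of_int_recurrence {u : ℤ → ℝ} {b ε : ℕ → ℝ}
    (h : ∀ n : ℕ, 1 ≤ n →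
      u n = b (n - 1) * u ((n : ℤ) - 1) + ε (n - 1) * u ((n : ℤ) - 2)) :
    IsContinuant b ε fun n => u ((n : ℤ) - 1) := by
  intro n
  have hrec := h (n + 1) (Nat.le_add_left 1 n)
  push_cast at hrec ⊢
  rwa [show (n : ℤ) + 1 - 2 = n - 1 by ring, show (n : ℤ) + 1 = n + 2 - 1 by ring,
    show (n : ℤ) + 2 - 1 - 1 = n + 1 - 1 by ring] at hrec

lemma one_le_two_mul_cos_pi_div {q : ℕ} (hq : 3 ≤ q) : 1 ≤ 2 * Real.cos (Real.pi / q) := by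
  have hcos : Real.cos (Real.pi / 3) ≤ Real.cos (Real.pi / q) := by
    refine Real.cos_le_cos_of_nonneg_of_le_pi (by positivity) (by linarith [Real.pi_pos]) ?_
    gcongr
    exact_mod_cast hq
  rw [Real.cos_pi_div_three] at hcos
  linarith

lemma two_mul_cos_pi_div_lt_two {q : ℕ} (hq : 0 < q) : 2 * Real.cos (Real.pi / q) < 2 := by
  have hcos : Real.cos (Real.pi / q) < Real.cos 0 :=
    Real.cos_lt_cos_of_nonneg_of_le_pi le_rfl
      (div_le_self Real.pi_pos.le (by exact_mod_cast hq)) (by positivity)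
  rw [Real.cos_zero] at hcos
  linarith

end AlphaRosen

theorem stmt17_general (lam α : ℝ) (hlam1 : 1 ≤ lam) (hlam2 : lam < 2)
    (hα1 : 1 / 2 ≤ α) (hα2 : α ≤ 1 / lam)
    (x : ℝ) (hx : x ∈ Icc (lam * (α - 1)) (α * lam))
    (hx0 : ∀ n : ℕ, (Tmap lam α)^[n] x ≠ 0)
    (R S : ℤ → ℝ)
    (hRm1 : R (-1) = 1) (hR0 : R 0 = 0)
    (hSm1 : S (-1) = 0) (hS0 : S 0 = 1)
    (hRrec : ∀ n : ℕ, 1 ≤ n →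
      R n = (dfun lam α ((Tmap lam α)^[n - 1] x) : ℝ) * lam * R ((n : ℤ) - 1)
        + Real.sign ((Tmap lam α)^[n - 1] x) * R ((n : ℤ) - 2))
    (hSrec : ∀ n : ℕ, 1 ≤ n →
      S n = (dfun lam α ((Tmap lam α)^[n - 1] x) : ℝ) * lam * S ((n : ℤ) - 1)
        + Real.sign ((Tmap lam α)^[n - 1] x) * S ((n : ℤ) - 2)) :
    (∀ n : ℕ, 1 ≤ n →
      |x - R n / S n| ≤ α * lam / ((1 + α * lam - lam) * (S n) ^ 2)) ∧
    Filter.Tendsto (fun n : ℕ => R n / S n) Filter.atTop (nhds x) := by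
  have hα : α * lam ≤ 1 := (le_div_iff₀ (by linarith)).mp hα2
  have h : AlphaRosen.IsRosenConvergents lam α x (fun n => R ((n : ℤ) - 1))
      (fun n => S ((n : ℤ) - 1)) :=
    { num := AlphaRosen.isContinuant_of_int_recurrence hRrec
      num_zero := hRm1
      num_one := hR0
      den := AlphaRosen.isContinuant_of_int_recurrence hSrec
      den_zero := hSm1
      den_one := hS0 }
  have hbound := h.abs_sub_div_le hlam1 hlam2 hα1 hα hx hx0
  have hlim := h.tendsto_div hlam1 hlam2 hα1 hα hx hx0
  simp only [Nat.cast_add, Nat.cast_one, add_sub_cancel_right] at hbound hlim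
  exact ⟨fun n _ => hbound n, hlim⟩

/-- Section 2.3: the α-Rosen convergents `Rₙ/Sₙ` of `x` satisfy
`|x - Rₙ/Sₙ| ≤ αλ/((1+αλ-λ)Sₙ²)`; in particular they converge to `x`. -/
theorem stmt17 (q : ℕ) (hq : 3 ≤ q) (lam α : ℝ)
    (hlam : lam = 2 * Real.cos (Real.pi / q))
    (hα1 : 1 / 2 ≤ α) (hα2 : α ≤ 1 / lam)
    (x : ℝ) (hx : x ∈ Icc (lam * (α - 1)) (α * lam))
    (hx0 : ∀ n : ℕ, (Tmap lam α)^[n] x ≠ 0)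
    (R S : ℤ → ℝ)
    (hRm1 : R (-1) = 1) (hR0 : R 0 = 0)
    (hSm1 : S (-1) = 0) (hS0 : S 0 = 1)
    (hRrec : ∀ n : ℕ, 1 ≤ n →
      R n = (dfun lam α ((Tmap lam α)^[n - 1] x) : ℝ) * lam * R ((n : ℤ) - 1)
        + Real.sign ((Tmap lam α)^[n - 1] x) * R ((n : ℤ) - 2))
    (hSrec : ∀ n : ℕ, 1 ≤ n →
      S n = (dfun lam α ((Tmap lam α)^[n - 1] x) : ℝ) * lam * S ((n : ℤ) - 1)
        + Real.sign ((Tmap lam α)^[n - 1] x) * S ((n : ℤ) - 2)) :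
    (∀ n : ℕ, 1 ≤ n →
      |x - R n / S n| ≤ α * lam / ((1 + α * lam - lam) * (S n) ^ 2)) ∧
    Filter.Tendsto (fun n : ℕ => R n / S n) Filter.atTop (nhds x) := by
  subst hlam
  exact stmt17_general _ α (AlphaRosen.one_le_two_mul_cos_pi_div hq)
    (AlphaRosen.two_mul_cos_pi_div_lt_two (by omega)) hα1 hα2 x hx hx0 R S hRm1 hR0 hSm1 hS0
    hRrec hSrec
end
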